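/- Let X ⊆ (ℂ^n,0) be a germ of an analytic variety and f ∈ m a holomorphic function germ. The pair (f, X) is relatively quasihomogeneous if and only if there exists a logarithmic vector field δ ∈ Θ_X with δ(0) = 0 and δ(f) = f whose eigenvalues sp(δ) = (w_1,...,w_n) are all positive rational numbers. -/

import Mathlib

open Filter Topology Polynomial

set_option maxHeartbeats 1000000
set_option synthInstance.maxHeartbeats 1000000

noncomputable section

/-- The algebra structure on germs of complex valued functions. -/
instance Filter.Germ.instAlgebraComplex {α : Type*} (l : Filter α) :
    Algebra ℂ (Filter.Germ l ℂ) where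
  algebraMap := (Filter.Germ.coeRingHom l).comp (algebraMap ℂ (α → ℂ))
  commutes' := fun c g => mul_comm _ _
  smul_def' := fun c g => Filter.Germ.inductionOn g fun f => rfl

/-- The local algebra `𝒪ₙ` of germs at `0 ∈ ℂⁿ` of holomorphic functions,
realized as the subalgebra of germs at `0` admitting an analytic representative. -/
def On (n : ℕ) : Subalgebra ℂ (Filter.Germ (𝓝 (0 : Fin n → ℂ)) ℂ) where
  carrier := {g | ∃ f : (Fin n → ℂ) → ℂ,
    AnalyticAt ℂ f 0 ∧ (f : Filter.Germ (𝓝 (0 : Fin n → ℂ)) ℂ) = g}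
  mul_mem' := by
    rintro a b ⟨f, hf, rfl⟩ ⟨g, hg, rfl⟩
    exact ⟨f * g, hf.mul hg, rfl⟩
  add_mem' := by
    rintro a b ⟨f, hf, rfl⟩ ⟨g, hg, rfl⟩
    exact ⟨f + g, hf.add hg, rfl⟩
  algebraMap_mem' := fun c => ⟨fun _ => c, analyticAt_const, rfl⟩

variable {n : ℕ}

/-- Existence of an analytic representative for an element of `𝒪ₙ`. -/
lemma On.exists_rep (g : On n) : ∃ f : (Fin n → ℂ) → ℂ,
    AnalyticAt ℂ f 0 ∧ (f : Filter.Germ (𝓝 (0 : Fin n → ℂ)) ℂ) = (g : Filter.Germ _ ℂ) :=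
  g.2

/-- A chosen analytic representative of a germ in `𝒪ₙ`. -/
def On.rep (g : On n) : (Fin n → ℂ) → ℂ := (On.exists_rep g).choose

lemma On.rep_analyticAt (g : On n) : AnalyticAt ℂ (On.rep g) 0 :=
  (On.exists_rep g).choose_spec.1

lemma On.rep_spec (g : On n) :
    (On.rep g : Filter.Germ (𝓝 (0 : Fin n → ℂ)) ℂ) = (g : Filter.Germ _ ℂ) :=
  (On.exists_rep g).choose_spec.2

/-- Build an element of `𝒪ₙ` from an analytic function. -/
def mkOn {n : ℕ} (f : (Fin n → ℂ) → ℂ) (hf : AnalyticAt ℂ f 0) : On n :=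
  ⟨(f : Filter.Germ (𝓝 (0 : Fin n → ℂ)) ℂ), ⟨f, hf, rfl⟩⟩

/-- The `i`-th partial derivative, as an operation on `𝒪ₙ`. -/
def pd (i : Fin n) (g : On n) : On n :=
  mkOn (fun x => fderiv ℂ (On.rep g) x (Pi.single i 1)) (by
    have h := ((ContinuousLinearMap.apply ℂ ℂ (Pi.single i 1)).analyticAt
      (fderiv ℂ (On.rep g) 0)).comp (On.rep_analyticAt g).fderiv
    exact h)

/-- Restriction of germs at `0` to germs along a finer filter. -/
def restrictGerm {l : Filter (Fin n → ℂ)} (hl : l ≤ 𝓝 (0 : Fin n → ℂ)) :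
    Filter.Germ (𝓝 (0 : Fin n → ℂ)) ℂ →+* Filter.Germ l ℂ where
  toFun g := g.compTendsto id (Filter.tendsto_id'.2 hl)
  map_one' := rfl
  map_mul' a b := Filter.Germ.inductionOn₂ a b fun f g => rfl
  map_zero' := rfl
  map_add' a b := Filter.Germ.inductionOn₂ a b fun f g => rfl

/-- Evaluation of germs restricted along `l ≤ 𝓝 0`, as a ring homomorphism on `𝒪ₙ`. -/
def restrictOn (n : ℕ) {l : Filter (Fin n → ℂ)} (hl : l ≤ 𝓝 (0 : Fin n → ℂ)) :
    On n →+* Filter.Germ l ℂ :=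
  (restrictGerm hl).comp (On n).val.toRingHom

/-- The ideal `I_X ⊆ 𝒪ₙ` of germs vanishing on a set `X` near `0`. -/
def IX (n : ℕ) (X : Set (Fin n → ℂ)) : Ideal (On n) :=
  RingHom.ker (restrictOn n (nhdsWithin_le_nhds (s := X)))

/-- The maximal ideal `𝔪 ⊂ 𝒪ₙ` of germs vanishing at the origin. -/
def mId (n : ℕ) : Ideal (On n) :=
  RingHom.ker (restrictOn n (pure_le_nhds (0 : Fin n → ℂ)))

/-- `X` is the germ at `0` of an analytic variety: `0 ∈ X` and, near `0`, `X` coincides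
with the common zero locus of finitely many holomorphic functions. -/
def IsAnalyticGermAt0 (n : ℕ) (X : Set (Fin n → ℂ)) : Prop :=
  (0 : Fin n → ℂ) ∈ X ∧
    ∃ (m : ℕ) (g : Fin m → (Fin n → ℂ) → ℂ),
      (∀ j, AnalyticAt ℂ (g j) 0) ∧
      ∀ᶠ x in 𝓝 (0 : Fin n → ℂ), (x ∈ X ↔ ∀ j, g j x = 0)

/-- The action `δ(g) = Σ δᵢ ∂g/∂xᵢ` of a vector field `δ ∈ Θ ≅ 𝒪ₙⁿ` on `g ∈ 𝒪ₙ`. -/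
def applyVF (δ : Fin n → On n) (g : On n) : On n := ∑ i, δ i * pd i g

lemma applyVF_add (a b : Fin n → On n) (g : On n) :
    applyVF (a + b) g = applyVF a g + applyVF b g := by
  simp [applyVF, add_mul, Finset.sum_add_distrib]

lemma applyVF_smul (c : On n) (a : Fin n → On n) (g : On n) :
    applyVF (c • a) g = c * applyVF a g := by
  simp [applyVF, Finset.mul_sum, smul_eq_mul, mul_assoc]

/-- For fixed `f`, the map `δ ↦ δ(f)` as an `𝒪ₙ`-linear map `Θ → 𝒪ₙ`. -/
def gradMap (n : ℕ) (f : On n) : (Fin n → On n) →ₗ[On n] On n where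
  toFun δ := applyVF δ f
  map_add' a b := applyVF_add a b f
  map_smul' c a := applyVF_smul c a f

/-- The module `Θ_X` of logarithmic vector fields of `X`, i.e. vector fields
preserving the ideal `I_X`. -/
def ThetaX (n : ℕ) (X : Set (Fin n → ℂ)) : Submodule (On n) (Fin n → On n) where
  carrier := {δ | ∀ g ∈ IX n X, applyVF δ g ∈ IX n X}
  add_mem' := by
    intro a b ha hb g hg
    rw [applyVF_add]
    exact Ideal.add_mem _ (ha g hg) (hb g hg)
  zero_mem' := by
    intro g hg
    have h0 : applyVF (0 : Fin n → On n) g = 0 := by simp [applyVF]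
    rw [h0]; exact Ideal.zero_mem _
  smul_mem' := by
    intro c a ha g hg
    rw [applyVF_smul]
    exact Ideal.mul_mem_left _ _ (ha g hg)

/-- The module `Θ_Y` of vector fields tangent to the hypersurface `Y = f⁻¹(0)`,
i.e. `δ(f) ∈ ⟨f⟩`. -/
def ThetaF (n : ℕ) (f : On n) : Submodule (On n) (Fin n → On n) :=
  Submodule.comap (gradMap n f) (Ideal.span {f})

/-- The module `H_Y` of Hamiltonian vector fields of `f`, i.e. `δ(f) = 0`. -/
def HamF (n : ℕ) (f : On n) : Submodule (On n) (Fin n → On n) :=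
  LinearMap.ker (gradMap n f)

/-- The Bruce–Roberts ideal `df(Θ_X) ⊆ 𝒪ₙ`. -/
def BRIdeal (n : ℕ) (X : Set (Fin n → ℂ)) (f : On n) : Ideal (On n) :=
  Submodule.map (gradMap n f) (ThetaX n X)

/-- The Jacobian ideal `J(f) = ⟨∂f/∂x₁, …, ∂f/∂xₙ⟩`. -/
def Jac (n : ℕ) (f : On n) : Ideal (On n) :=
  Ideal.span (Set.range fun i => pd i f)

/-- The ideal `J(f,h)` generated by the `2×2` minors of the Jacobian matrix of `(f,h)`. -/
def Jmin (n : ℕ) (f h : On n) : Ideal (On n) :=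
  Ideal.span (Set.range fun p : Fin n × Fin n => pd p.1 f * pd p.2 h - pd p.2 f * pd p.1 h)

/-- The Milnor number `μ(f)`. -/
def mu (n : ℕ) (f : On n) : ℕ := Module.finrank ℂ (On n ⧸ Jac n f)

/-- The Tjurina number `τ(f)`. -/
def tau (n : ℕ) (f : On n) : ℕ :=
  Module.finrank ℂ (On n ⧸ (Jac n f + Ideal.span {f}))

/-- The Bruce–Roberts Milnor number `μ_X(f)`. -/
def muX (n : ℕ) (X : Set (Fin n → ℂ)) (f : On n) : ℕ :=
  Module.finrank ℂ (On n ⧸ BRIdeal n X f)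

/-- The Bruce–Roberts Tjurina number `τ_X(f)`. -/
def tauX (n : ℕ) (X : Set (Fin n → ℂ)) (f : On n) : ℕ :=
  Module.finrank ℂ (On n ⧸ (BRIdeal n X f + Ideal.span {f}))

/-- The value at the origin of a germ in `𝒪ₙ`. -/
def ev0 (g : On n) : ℂ := On.rep g 0

/-- The linear part `j¹δ` of a vector field `δ`, as the matrix `(∂δⱼ/∂xᵢ)(0)`. -/
def linPart (δ : Fin n → On n) : Matrix (Fin n) (Fin n) ℂ :=
  Matrix.of fun i j => ev0 (pd i (δ j))

/-- The eigenvalues (with multiplicities) of the linear part of `δ` are given by `w`. -/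
def EigsEq (δ : Fin n → On n) (w : Fin n → ℚ) : Prop :=
  (linPart δ).charpoly = ∏ i, (Polynomial.X - Polynomial.C ((w i : ℂ)))

/-- The germ at `0` of the coordinate function `xᵢ`. -/
def coordG (i : Fin n) : On n :=
  mkOn (fun x : Fin n → ℂ => x i)
    ((ContinuousLinearMap.proj (R := ℂ) (φ := fun _ : Fin n => ℂ) i).analyticAt _)

/-- `g` is quasihomogeneous of degree `d` with respect to the weights `w` (in the given
coordinates): the Euler identity `Σ wᵢ xᵢ ∂g/∂xᵢ = d g` holds. -/
def IsQH (n : ℕ) (w : Fin n → ℚ) (d : ℚ) (g : On n) : Prop :=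
  ∑ i, (w i : ℂ) • (coordG i * pd i g) = (d : ℂ) • g

/-- A germ of a biholomorphic change of coordinates at `0 ∈ ℂⁿ`. -/
structure CoordChange (n : ℕ) where
  toFun : (Fin n → ℂ) → (Fin n → ℂ)
  invFun : (Fin n → ℂ) → (Fin n → ℂ)
  analyticAt : AnalyticAt ℂ toFun 0
  inv_analyticAt : AnalyticAt ℂ invFun 0
  map_zero : toFun 0 = 0
  inv_map_zero : invFun 0 = 0
  left_inv : ∀ᶠ x in 𝓝 (0 : Fin n → ℂ), invFun (toFun x) = x
  right_inv : ∀ᶠ x in 𝓝 (0 : Fin n → ℂ), toFun (invFun x) = x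

lemma CoordChange.tendsto (φ : CoordChange n) :
    Filter.Tendsto φ.toFun (𝓝 (0 : Fin n → ℂ)) (𝓝 (0 : Fin n → ℂ)) := by
  have h := φ.analyticAt.continuousAt
  rwa [ContinuousAt, φ.map_zero] at h

/-- The pullback (composition) of a germ `g ∈ 𝒪ₙ` under a change of coordinates. -/
def pullback (φ : CoordChange n) (g : On n) : On n :=
  ⟨(g : Filter.Germ (𝓝 (0 : Fin n → ℂ)) ℂ).compTendsto φ.toFun φ.tendsto, by
    refine ⟨On.rep g ∘ φ.toFun, ?_, ?_⟩
    · have h := On.rep_analyticAt g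
      rw [← φ.map_zero] at h
      exact h.comp φ.analyticAt
    · rw [← On.rep_spec g]
      exact (Filter.Germ.coe_compTendsto _ φ.tendsto).symm⟩

/-- Definition 1.1: the pair `(f, X)` is relatively quasihomogeneous with respect to the
weights `w`: in suitable coordinates, `f` is quasihomogeneous of degree `1` and `I_X` admits
a system of quasihomogeneous generators of positive degrees, all with respect to `w`. -/
def RelQH (n : ℕ) (X : Set (Fin n → ℂ)) (f : On n) (w : Fin n → ℚ) : Prop :=
  ∃ φ : CoordChange n,
    IsQH n w 1 (pullback φ f) ∧
    ∃ (m : ℕ) (h : Fin m → On n) (d : Fin m → ℚ),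
      Ideal.span (Set.range h) = IX n X ∧ (∀ j, 0 < d j) ∧
      ∀ j, IsQH n w (d j) (pullback φ (h j))

/-- The variety `X` is quasihomogeneous with respect to the weights `w`: in suitable
coordinates, `I_X` admits a system of quasihomogeneous generators of positive degrees. -/
def VarQH (n : ℕ) (X : Set (Fin n → ℂ)) (w : Fin n → ℚ) : Prop :=
  ∃ φ : CoordChange n,
    ∃ (m : ℕ) (h : Fin m → On n) (d : Fin m → ℚ),
      Ideal.span (Set.range h) = IX n X ∧ (∀ j, 0 < d j) ∧
      ∀ j, IsQH n w (d j) (pullback φ (h j))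

instance (f : On n) : HasQuotient (↥(ThetaF n f)) (Submodule ↥(On n) ↥(ThetaF n f)) :=
  Submodule.hasQuotient (R := ↥(On n)) (M := ↥(ThetaF n f))

open scoped NNReal ENNReal

abbrev Idx (n : ℕ) := Fin n →₀ ℕ
abbrev PS (n : ℕ) := MvPowerSeries (Fin n) ℂ

/-- Weight of a monomial. -/
def wt (ρ : Fin n → ℝ≥0) (α : Idx n) : ℝ≥0 := ∏ i, ρ i ^ α i

lemma wt_add (ρ : Fin n → ℝ≥0) (α β : Idx n) : wt ρ (α + β) = wt ρ α * wt ρ β := by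
  simp [wt, pow_add, Finset.prod_mul_distrib]

lemma wt_zero (ρ : Fin n → ℝ≥0) : wt ρ 0 = 1 := by simp [wt]

lemma wt_single (ρ : Fin n → ℝ≥0) (i : Fin n) : wt ρ (Finsupp.single i 1) = ρ i := by
  classical
  simp only [wt, Finsupp.single_apply]
  rw [Finset.prod_eq_single i] <;> simp +contextual [eq_comm]

lemma wt_mono {ρ ρ' : Fin n → ℝ≥0} (h : ∀ i, ρ i ≤ ρ' i) (α : Idx n) : wt ρ α ≤ wt ρ' α :=
  Finset.prod_le_prod' fun i _ => pow_le_pow_left₀ (zero_le) (h i) _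

lemma wt_pos {ρ : Fin n → ℝ≥0} (h : ∀ i, 0 < ρ i) (α : Idx n) : 0 < wt ρ α :=
  Finset.prod_pos fun i _ => pow_pos (h i) _

/-- Weighted l1 norm of a formal power series. -/
def nrm (ρ : Fin n → ℝ≥0) (c : PS n) : ℝ≥0∞ :=
  ∑' α : Idx n, ((‖MvPowerSeries.coeff α c‖₊ * wt ρ α : ℝ≥0) : ℝ≥0∞)

lemma nrm_mono {ρ ρ' : Fin n → ℝ≥0} (h : ∀ i, ρ i ≤ ρ' i) (c : PS n) : nrm ρ c ≤ nrm ρ' c :=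
  ENNReal.tsum_le_tsum fun α => by
    have := wt_mono h α
    exact_mod_cast mul_le_mul_right this _

lemma nrm_le_of_coeff {ρ : Fin n → ℝ≥0} {c d : PS n}
    (h : ∀ α, ‖MvPowerSeries.coeff α c‖₊ ≤ ‖MvPowerSeries.coeff α d‖₊) : nrm ρ c ≤ nrm ρ d :=
  ENNReal.tsum_le_tsum fun α => by
    exact_mod_cast mul_le_mul_left (h α) _

lemma nrm_zero (ρ : Fin n → ℝ≥0) : nrm ρ (0 : PS n) = 0 := by simp [nrm]

lemma nrm_add_le (ρ : Fin n → ℝ≥0) (c d : PS n) : nrm ρ (c + d) ≤ nrm ρ c + nrm ρ d := by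
  rw [nrm, nrm, nrm, ← ENNReal.tsum_add]
  refine ENNReal.tsum_le_tsum fun α => ?_
  rw [← ENNReal.coe_add, ← add_mul, map_add]
  exact_mod_cast mul_le_mul_left (nnnorm_add_le _ _) _

lemma nrm_neg (ρ : Fin n → ℝ≥0) (c : PS n) : nrm ρ (-c) = nrm ρ c := by
  simp [nrm]

lemma nrm_sum_le {ι : Type*} (s : Finset ι) (ρ : Fin n → ℝ≥0) (c : ι → PS n) :
    nrm ρ (∑ i ∈ s, c i) ≤ ∑ i ∈ s, nrm ρ (c i) := by
  classical
  induction s using Finset.induction_on with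
  | empty => simp [nrm_zero]
  | insert a s ha ih =>
    rw [Finset.sum_insert ha, Finset.sum_insert ha]
    exact (nrm_add_le _ _ _).trans (by gcongr)

lemma nrm_monomial (ρ : Fin n → ℝ≥0) (α : Idx n) (a : ℂ) :
    nrm ρ (MvPowerSeries.monomial α a) = ((‖a‖₊ * wt ρ α : ℝ≥0) : ℝ≥0∞) := by
  classical
  rw [nrm, tsum_eq_single α]
  · simp
  · intro β hβ
    simp [MvPowerSeries.coeff_monomial, hβ]

lemma nrm_mul_le (ρ : Fin n → ℝ≥0) (c d : PS n) : nrm ρ (c * d) ≤ nrm ρ c * nrm ρ d := by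
  classical
  have key : nrm ρ c * nrm ρ d = ∑' β : Idx n, ∑ p ∈ Finset.HasAntidiagonal.antidiagonal β,
      ((‖MvPowerSeries.coeff p.1 c‖₊ * wt ρ p.1 : ℝ≥0) : ℝ≥0∞) *
      ((‖MvPowerSeries.coeff p.2 d‖₊ * wt ρ p.2 : ℝ≥0) : ℝ≥0∞) := by
    rw [nrm, nrm, ← ENNReal.tsum_mul_right]
    simp_rw [← ENNReal.tsum_mul_left]
    rw [← ENNReal.tsum_prod, ← (Finset.HasAntidiagonal.sigmaAntidiagonalEquivProd (A := Idx n)).tsum_eq,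
      ENNReal.tsum_sigma']
    refine tsum_congr fun β => ?_
    rw [tsum_fintype, ← Finset.sum_coe_sort (Finset.HasAntidiagonal.antidiagonal β)]
    rfl
  rw [key, nrm]
  refine ENNReal.tsum_le_tsum fun β => ?_
  rw [MvPowerSeries.coeff_mul]
  calc ((‖∑ p ∈ Finset.HasAntidiagonal.antidiagonal β, MvPowerSeries.coeff p.1 c * MvPowerSeries.coeff p.2 d‖₊
        * wt ρ β : ℝ≥0) : ℝ≥0∞)
      ≤ ((∑ p ∈ Finset.HasAntidiagonal.antidiagonal β, ‖MvPowerSeries.coeff p.1 c * MvPowerSeries.coeff p.2 d‖₊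
        * wt ρ β : ℝ≥0) : ℝ≥0∞) := by
        rw [← Finset.sum_mul]
        exact_mod_cast mul_le_mul_left (nnnorm_sum_le _ _) _
    _ = _ := by
        rw [ENNReal.ofNNReal_finsetSum]
        refine Finset.sum_congr rfl fun p hp => ?_
        rw [← ENNReal.coe_mul, ← Finset.HasAntidiagonal.mem_antidiagonal.1 hp, wt_add, nnnorm_mul]
        congr 1
        ring

/-- Causal contraction: the operator `1 + T` is surjective on the weighted l1 space. -/
lemma neumann (ρ : Fin n → ℝ≥0) (hρ : ∀ i, 0 < ρ i) (N : Idx n → ℕ) (T : PS n →ₗ[ℂ] PS n)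
    (hc : ∀ (u : PS n) (β : Idx n), (∀ α, N α < N β → MvPowerSeries.coeff α u = 0) →
      MvPowerSeries.coeff β (T u) = 0)
    (hT : ∀ u, 2 * nrm ρ (T u) ≤ nrm ρ u) (h : PS n) (hh : nrm ρ h < ⊤) :
    ∃ u : PS n, u + T u = h ∧ nrm ρ u < ⊤ := by
  obtain ⟨v, v0, vs⟩ : ∃ v : ℕ → PS n, v 0 = 0 ∧ ∀ k, v (k+1) = h - T (v k) :=
    ⟨fun k => Nat.rec 0 (fun _ x => h - T x) k, rfl, fun k => rfl⟩
  have hst : ∀ k β, N β < k → MvPowerSeries.coeff β (v (k+1)) = MvPowerSeries.coeff β (v k) := by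
    intro k
    induction k with
    | zero => intro β hβ; omega
    | succ k ih =>
      intro β hβ
      have : v (k+1+1) - v (k+1) = - T (v (k+1) - v k) := by
        rw [map_sub, vs (k+1)]; nth_rw 2 [vs k]; abel
      rw [← sub_eq_zero, ← map_sub]
      rw [this, map_neg, neg_eq_zero]
      apply hc
      intro α hα
      rw [map_sub, sub_eq_zero]
      exact ih α (by omega)
  have hst' : ∀ β k, N β < k → MvPowerSeries.coeff β (v k) =
      MvPowerSeries.coeff β (v (N β + 1)) := by
    intro β k hk
    induction k, hk using Nat.le_induction with
    | base => rfl
    | succ k hk ih => rw [hst k β hk, ih]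
  let u : PS n := fun β => MvPowerSeries.coeff β (v (N β + 1))
  have hu : ∀ β, MvPowerSeries.coeff β u = MvPowerSeries.coeff β (v (N β + 1)) := fun β => rfl
  have hb : ∀ k, nrm ρ (v k) ≤ 2 * nrm ρ h := by
    intro k
    induction k with
    | zero => rw [v0, nrm_zero]; exact zero_le
    | succ k ih =>
      rw [vs, sub_eq_add_neg]
      refine (nrm_add_le _ _ _).trans ?_
      rw [nrm_neg, two_mul]
      gcongr
      have h1 := (hT (v k)).trans ih
      exact (ENNReal.mul_le_mul_iff_right (by simp) (by simp)).1 h1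
  refine ⟨u, ?_, ?_⟩
  · ext β
    have h1 : MvPowerSeries.coeff β (T u) = MvPowerSeries.coeff β (T (v (N β))) := by
      rw [← sub_eq_zero, ← map_sub, ← map_sub]
      apply hc
      intro α hα
      rw [map_sub, hu, hst' α (N β) hα, sub_self]
    rw [map_add, hu, vs, map_sub, h1]
    ring
  · refine lt_of_le_of_lt ?_ (ENNReal.mul_lt_top (by simp : (2:ℝ≥0∞) < ⊤) hh)
    rw [nrm]
    rw [ENNReal.tsum_eq_iSup_sum]
    refine iSup_le fun s => ?_
    refine le_trans ?_ (hb (s.sup N + 1))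
    refine le_trans (Finset.sum_le_sum fun β hβ => ?_) (ENNReal.sum_le_tsum s)
    rw [hu, hst' β (s.sup N + 1) (Nat.lt_succ_of_le (Finset.le_sup hβ))]

/-- Convergent power series. -/
def IsConv (c : PS n) : Prop := ∃ ρ : Fin n → ℝ≥0, (∀ i, 0 < ρ i) ∧ nrm ρ c < ⊤

lemma exists_common {c d : PS n} (hc : IsConv c) (hd : IsConv d) :
    ∃ ρ : Fin n → ℝ≥0, (∀ i, 0 < ρ i) ∧ nrm ρ c < ⊤ ∧ nrm ρ d < ⊤ := by
  obtain ⟨ρ, h0, h1⟩ := hc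
  obtain ⟨ρ', h0', h1'⟩ := hd
  exact ⟨fun i => min (ρ i) (ρ' i), fun i => lt_min (h0 i) (h0' i),
    (nrm_mono (fun i => min_le_left _ _) _).trans_lt h1,
    (nrm_mono (fun i => min_le_right _ _) _).trans_lt h1'⟩

def RC (n : ℕ) : Subalgebra ℂ (PS n) where
  carrier := {c | IsConv c}
  mul_mem' := by
    intro a b ha hb
    obtain ⟨ρ, h0, h1, h2⟩ := exists_common ha hb
    exact ⟨ρ, h0, (nrm_mul_le _ _ _).trans_lt (ENNReal.mul_lt_top h1 h2)⟩
  add_mem' := by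
    intro a b ha hb
    obtain ⟨ρ, h0, h1, h2⟩ := exists_common ha hb
    exact ⟨ρ, h0, (nrm_add_le _ _ _).trans_lt (ENNReal.add_lt_top.2 ⟨h1, h2⟩)⟩
  algebraMap_mem' := by
    intro r
    refine ⟨fun _ => 1, fun _ => one_pos, ?_⟩
    rw [MvPowerSeries.algebraMap_apply, ← MvPowerSeries.monomial_zero_eq_C_apply, nrm_monomial]
    exact ENNReal.coe_lt_top

lemma mem_RC {c : PS n} : c ∈ RC n ↔ IsConv c := Iff.rfl

lemma monomial_mem_RC (α : Idx n) (a : ℂ) : (MvPowerSeries.monomial α a : PS n) ∈ RC n := by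
  refine ⟨fun _ => 1, fun _ => one_pos, ?_⟩
  rw [nrm_monomial]
  exact ENNReal.coe_lt_top

lemma X_mem_RC (i : Fin n) : (MvPowerSeries.X i : PS n) ∈ RC n := monomial_mem_RC _ _

/-- Multiplicative integer grading. -/
def Nq (q : Fin n → ℕ) (α : Idx n) : ℕ := ∏ i, q i ^ α i

lemma Nq_add (q : Fin n → ℕ) (α β : Idx n) : Nq q (α + β) = Nq q α * Nq q β := by
  simp [Nq, pow_add, Finset.prod_mul_distrib]

lemma Nq_single (q : Fin n → ℕ) (i : Fin n) : Nq q (Finsupp.single i 1) = q i := by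
  classical
  simp only [Nq, Finsupp.single_apply]
  rw [Finset.prod_eq_single i] <;> simp +contextual [eq_comm]

lemma Nq_pos {q : Fin n → ℕ} (hq : ∀ i, 2 ≤ q i) (α : Idx n) : 0 < Nq q α :=
  Finset.prod_pos fun i _ => pow_pos (by have := hq i; omega) _

def qr (q : Fin n → ℕ) (s : ℕ) : Fin n → ℝ≥0 := fun i => ((q i : ℝ≥0)⁻¹) ^ s

lemma qr_pos {q : Fin n → ℕ} (hq : ∀ i, 2 ≤ q i) (s : ℕ) (i : Fin n) : 0 < qr q s i := by
  have : (0 : ℝ≥0) < q i := by exact_mod_cast (by have := hq i; omega : 0 < q i)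
  exact pow_pos (inv_pos.2 this) _

lemma wt_qr (q : Fin n → ℕ) (s : ℕ) (α : Idx n) : wt (qr q s) α = ((Nq q α : ℝ≥0)⁻¹) ^ s := by
  simp only [wt, qr, Nq]
  push_cast
  rw [← Finset.prod_inv_distrib, ← Finset.prod_pow]
  refine Finset.prod_congr rfl fun i _ => ?_
  rw [← pow_mul, mul_comm, pow_mul, inv_pow]

lemma exists_qr {q : Fin n → ℕ} (hq : ∀ i, 2 ≤ q i) {c : PS n} (hc : IsConv c) :
    ∃ s, nrm (qr q s) c < ⊤ := by
  obtain ⟨ρ, h0, h1⟩ := hc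
  have : ∀ i, ∃ s0, ∀ s ≥ s0, qr q s i ≤ ρ i := by
    intro i
    have h2 : (2:ℝ≥0) ≤ q i := by exact_mod_cast hq i
    have hlt : ((q i : ℝ≥0)⁻¹) < 1 := inv_lt_one_of_one_lt₀ (lt_of_lt_of_le one_lt_two h2)
    have ht := tendsto_pow_atTop_nhds_zero_of_lt_one (zero_le) hlt
    have := ht.eventually (Iic_mem_nhds (h0 i))
    exact eventually_atTop.1 this
  choose s0 hs0 using this
  refine ⟨Finset.univ.sup s0, (nrm_mono (fun i => ?_) c).trans_lt h1⟩
  exact hs0 i _ (Finset.le_sup (Finset.mem_univ i))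

lemma tail_small {q : Fin n → ℕ} (hq : ∀ i, 2 ≤ q i) {c : PS n} (hc : IsConv c) (K : ℕ)
    (hK : 0 < K) (h : ∀ α, MvPowerSeries.coeff α c ≠ 0 → K < Nq q α) (ε : ℝ≥0) (hε : 0 < ε) :
    ∃ s0, ∀ s ≥ s0, nrm (qr q s) c ≤ ((ε * ((K : ℝ≥0)⁻¹) ^ s : ℝ≥0) : ℝ≥0∞) := by
  obtain ⟨s1, hs1⟩ := exists_qr hq hc
  have hK0 : (0 : ℝ≥0) < K := by exact_mod_cast hK
  have hstep : ∀ t, nrm (qr q (s1 + t)) c ≤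
      nrm (qr q s1) c * ((((K + 1 : ℕ) : ℝ≥0)⁻¹) ^ t : ℝ≥0) := by
    intro t
    rw [nrm, nrm, ← ENNReal.tsum_mul_right]
    refine ENNReal.tsum_le_tsum fun α => ?_
    rw [← ENNReal.coe_mul, wt_qr, wt_qr, pow_add, ← mul_assoc]
    by_cases h0 : MvPowerSeries.coeff α c = 0
    · simp [h0]
    · have h2 : ((K + 1 : ℕ) : ℝ≥0) ≤ Nq q α := by exact_mod_cast h α h0
      have h3 : ((Nq q α : ℝ≥0)⁻¹) ≤ (((K + 1 : ℕ) : ℝ≥0)⁻¹) :=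
        inv_anti₀ (by exact_mod_cast Nat.succ_pos K) h2
      have := pow_le_pow_left₀ (zero_le) h3 t
      exact_mod_cast mul_le_mul_right this _
  lift nrm (qr q s1) c to ℝ≥0 using hs1.ne with B hB
  have hlt : (K : ℝ≥0) * (((K + 1 : ℕ) : ℝ≥0)⁻¹) < 1 := by
    rw [← div_eq_mul_inv, div_lt_one (by exact_mod_cast Nat.succ_pos K)]
    exact_mod_cast Nat.lt_succ_self K
  have ht := (tendsto_pow_atTop_nhds_zero_of_lt_one (zero_le) hlt).const_mul (B * (K:ℝ≥0)^s1)
  rw [mul_zero] at ht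
  obtain ⟨t0, ht0⟩ := eventually_atTop.1 (ht.eventually (Iic_mem_nhds hε))
  refine ⟨s1 + t0, fun s hs => ?_⟩
  obtain ⟨t, rfl⟩ : ∃ t, s = s1 + t := ⟨s - s1, by omega⟩
  refine (hstep t).trans ?_
  have h4 : B * (K:ℝ≥0)^s1 * ((K : ℝ≥0) * (((K + 1 : ℕ) : ℝ≥0)⁻¹))^t ≤ ε := ht0 t (by omega)
  have h5 := mul_le_mul_left h4 (((K : ℝ≥0)⁻¹) ^ (s1 + t))
  have h6 : B * (K:ℝ≥0)^s1 * ((K : ℝ≥0) * (((K + 1 : ℕ) : ℝ≥0)⁻¹))^t * (((K : ℝ≥0)⁻¹) ^ (s1 + t))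
      = B * ((((K + 1 : ℕ) : ℝ≥0)⁻¹) ^ t) := by
    have hk : (K:ℝ≥0) ≠ 0 := hK0.ne'
    have e1 : (K:ℝ≥0)^s1 * ((K:ℝ≥0)⁻¹)^s1 = 1 := by rw [← mul_pow, mul_inv_cancel₀ hk, one_pow]
    have e2 : (K:ℝ≥0)^t * ((K:ℝ≥0)⁻¹)^t = 1 := by rw [← mul_pow, mul_inv_cancel₀ hk, one_pow]
    rw [mul_pow, pow_add]
    calc _ = B * ((((K + 1 : ℕ) : ℝ≥0)⁻¹) ^ t) * ((K:ℝ≥0)^s1 * ((K:ℝ≥0)⁻¹)^s1) *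
        ((K:ℝ≥0)^t * ((K:ℝ≥0)⁻¹)^t) := by ring
      _ = _ := by rw [e1, e2, mul_one, mul_one]
  rw [h6] at h5
  exact_mod_cast h5

/-- prime grading -/
def pq (n : ℕ) : Fin n → ℕ := fun i => Nat.nth Nat.Prime i

lemma pq_prime (i : Fin n) : (pq n i).Prime := Nat.prime_nth_prime _

lemma pq_inj : Function.Injective (pq n) := fun _ _ h =>
  Fin.ext (Nat.nth_injective Nat.infinite_setOfPred_prime h)

lemma Nq_inj : Function.Injective (Nq (pq n)) := by
  intro α β h
  ext i
  have key : ∀ γ : Idx n, (Nq (pq n) γ).factorization (pq n i) = γ i := by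
    intro γ
    rw [Nq, Nat.factorization_prod (fun j _ => pow_ne_zero _ (pq_prime j).ne_zero)]
    rw [Finsupp.finsetSum_apply, Finset.sum_eq_single i]
    · simp [Nat.Prime.factorization_pow (pq_prime i)]
    · intro j _ hj
      rw [Nat.Prime.factorization_pow (pq_prime j), Finsupp.single_apply, if_neg]
      exact fun h => hj (pq_inj h)
    · simp
  rw [← key α, h, key β]

/-- selection operator -/
def Qop (P : Idx n → Prop) [DecidablePred P] (a : Idx n) : PS n →ₗ[ℂ] PS n where
  toFun u := fun β => if P (β + a) then MvPowerSeries.coeff (β + a) u else 0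
  map_add' u v := by
    funext β
    change (if P (β + a) then MvPowerSeries.coeff (β + a) (u + v) else 0) =
      (if P (β + a) then MvPowerSeries.coeff (β + a) u else 0) + (if P (β + a) then MvPowerSeries.coeff (β + a) v else 0)
    split_ifs <;> simp
  map_smul' r u := by
    funext β
    change (if P (β + a) then MvPowerSeries.coeff (β + a) (r • u) else 0) =
      r * (if P (β + a) then MvPowerSeries.coeff (β + a) u else 0)
    split_ifs <;> simp

lemma coeff_Qop (P : Idx n → Prop) [DecidablePred P] (a : Idx n) (u : PS n) (β : Idx n) :
    MvPowerSeries.coeff β (Qop P a u) = if P (β + a) then MvPowerSeries.coeff (β + a) u else 0 :=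
  rfl

lemma nrm_Qop (ρ : Fin n → ℝ≥0) (P : Idx n → Prop) [DecidablePred P] (a : Idx n) (u : PS n) :
    nrm ρ (Qop P a u) * (wt ρ a : ℝ≥0) ≤
      ∑' γ, if P γ then ((‖MvPowerSeries.coeff γ u‖₊ * wt ρ γ : ℝ≥0) : ℝ≥0∞) else 0 := by
  rw [nrm, ← ENNReal.tsum_mul_right]
  refine le_trans (ENNReal.tsum_le_tsum fun β => ?_)
    (ENNReal.tsum_comp_le_tsum_of_injective (add_left_injective a) _)
  simp only [coeff_Qop]
  split_ifs
  · rw [← ENNReal.coe_mul, mul_assoc, wt_add]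
  · simp

lemma nrm_Qop_lt {ρ : Fin n → ℝ≥0} (hρ : ∀ i, 0 < ρ i) (P : Idx n → Prop) [DecidablePred P]
    (a : Idx n) {u : PS n} (hu : nrm ρ u < ⊤) : nrm ρ (Qop P a u) < ⊤ := by
  by_contra hcon
  have h1 := nrm_Qop ρ P a u
  rw [not_lt_top_iff.1 hcon, ENNReal.top_mul (by simpa using (wt_pos hρ a).ne')] at h1
  have h2 : (∑' γ, if P γ then ((‖MvPowerSeries.coeff γ u‖₊ * wt ρ γ : ℝ≥0) : ℝ≥0∞) else 0)
      ≤ nrm ρ u := ENNReal.tsum_le_tsum fun γ => by split_ifs <;> simp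
  exact absurd (lt_of_le_of_lt (h1.trans h2) hu) (lt_irrefl _)

lemma dickson (S : Set (Idx n)) : ∃ A : Finset (Idx n), (∀ a ∈ A, a ∈ S) ∧
    ∀ γ ∈ S, ∃ a ∈ A, a ≤ γ := by
  have hfin : {x | Minimal (· ∈ S) x}.Finite :=
    WellQuasiOrderedLE.finite_of_isAntichain (setOfPred_minimal_antichain _)
  refine ⟨hfin.toFinset, fun a ha => ?_, fun γ hγ => ?_⟩
  · exact (hfin.mem_toFinset.1 ha).1
  · obtain ⟨m, hm, hmin⟩ := exists_minimal_le_of_wellFoundedLT (· ∈ S) γ hγ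
    exact ⟨m, hfin.mem_toFinset.2 hmin, hm⟩

instance RC_noetherian : IsNoetherianRing (RC n) := by
  classical
  rw [isNoetherianRing_iff_ideal_fg]
  intro I
  let N := Nq (pq n)
  have hq : ∀ i, 2 ≤ pq n i := fun i => (pq_prime i).two_le
  let S : Set (Idx n) := {α | ∃ c : RC n, c ∈ I ∧ MvPowerSeries.coeff α (c : PS n) = 1 ∧
    ∀ β, MvPowerSeries.coeff β (c : PS n) ≠ 0 → β ≠ α → N α < N β}
  have hS : ∀ c : RC n, c ∈ I → c ≠ 0 → ∃ α ∈ S, MvPowerSeries.coeff α (c : PS n) ≠ 0 := by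
    intro c hc h0
    have hne : ∃ k α, MvPowerSeries.coeff α (c : PS n) ≠ 0 ∧ N α = k := by
      by_contra hcon
      push Not at hcon
      apply h0
      apply Subtype.ext
      ext α
      by_contra h1
      exact hcon (N α) α h1 rfl
    obtain ⟨α, h1, h2⟩ := Nat.find_spec hne
    refine ⟨α, ⟨(MvPowerSeries.coeff α (c : PS n))⁻¹ • c, ?_, ?_, ?_⟩, h1⟩
    · rw [Algebra.smul_def]; exact I.mul_mem_left _ hc
    · simp [h1]
    · intro β hβ hne'
      have hβ' : MvPowerSeries.coeff β (c : PS n) ≠ 0 := by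
        intro h; apply hβ; simp [h]
      have : N α ≤ N β := by rw [h2]; exact Nat.find_min' hne ⟨β, hβ', rfl⟩
      exact lt_of_le_of_ne this fun h => hne' (Nq_inj h).symm
  obtain ⟨A, hA, hAS⟩ := dickson S
  choose! f hfI hf1 hf2 using hA
  choose! sel hsel hle using hAS
  -- the tails
  let t : Idx n → PS n := fun a => (f a : PS n) - MvPowerSeries.monomial a 1
  have ht : ∀ a ∈ A, ∀ β, MvPowerSeries.coeff β (t a) ≠ 0 → N a < N β := by
    intro a ha β hβ
    by_cases h : β = a
    · subst h; exfalso; apply hβ; simp [t, hf1 _ ha]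
    · apply hf2 a ha β _ h
      intro h0; apply hβ; simp [t, MvPowerSeries.coeff_monomial, h, h0]
  have htc : ∀ a, IsConv (t a) := fun a => (RC n).sub_mem (f a).2 (monomial_mem_RC _ _)
  refine ⟨A.image f, ?_⟩
  apply le_antisymm
  · rw [Ideal.span_le]
    intro x hx
    obtain ⟨a, ha, rfl⟩ := Finset.mem_image.1 (Finset.mem_coe.1 hx)
    exact hfI a ha
  intro h hh
  -- choose a radius
  have hs : ∀ a ∈ A, ∃ s0, ∀ s ≥ s0, nrm (qr (pq n) s) (t a) ≤
      (((1/2 : ℝ≥0) * ((N a : ℝ≥0)⁻¹) ^ s : ℝ≥0) : ℝ≥0∞) := fun a ha =>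
    tail_small hq (htc a) (N a) (Nq_pos hq a) (ht a ha) (1/2) (by norm_num)
  choose! s0 hs0 using hs
  obtain ⟨s1, hs1⟩ := exists_qr hq h.2
  let s := max s1 (A.sup s0)
  let ρ := qr (pq n) s
  have hρ : ∀ i, 0 < ρ i := qr_pos hq s
  have hnh : nrm ρ (h : PS n) < ⊤ := by
    refine lt_of_le_of_lt (nrm_mono (fun i => ?_) _) hs1
    have h2 : (1:ℝ≥0) ≤ pq n i := by exact_mod_cast (pq_prime i).one_lt.le
    exact pow_le_pow_of_le_one (zero_le) (inv_le_one_of_one_le₀ h2) (le_max_left _ _)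
  have htn : ∀ a ∈ A, nrm ρ (t a) ≤ (((1/2 : ℝ≥0) * wt ρ a : ℝ≥0) : ℝ≥0∞) := by
    intro a ha
    have := hs0 a ha s ((Finset.le_sup ha).trans (le_max_right _ _))
    rwa [← wt_qr] at this
  let Q : Idx n → PS n →ₗ[ℂ] PS n := fun a => Qop (fun γ => γ ∈ S ∧ sel γ = a) a
  let T : PS n →ₗ[ℂ] PS n := ∑ a ∈ A, (LinearMap.mulRight ℂ (t a)) ∘ₗ Q a
  have hTu : ∀ u, T u = ∑ a ∈ A, Q a u * t a := fun u => by simp [T, LinearMap.sum_apply]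
  have hcaus : ∀ (u : PS n) (β : Idx n), (∀ α, N α < N β → MvPowerSeries.coeff α u = 0) →
      MvPowerSeries.coeff β (T u) = 0 := by
    intro u β hu
    rw [hTu, map_sum]
    refine Finset.sum_eq_zero fun a ha => ?_
    rw [MvPowerSeries.coeff_mul]
    refine Finset.sum_eq_zero fun p hp => ?_
    by_cases h1 : MvPowerSeries.coeff p.2 (t a) = 0
    · rw [h1, mul_zero]
    · have h2 := ht a ha _ h1
      rw [coeff_Qop, hu, ite_self, zero_mul]
      rw [← Finset.HasAntidiagonal.mem_antidiagonal.1 hp]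
      simp only [N, Nq_add]
      exact Nat.mul_lt_mul_of_pos_left h2 (Nq_pos hq _)
  have hcontr : ∀ u, 2 * nrm ρ (T u) ≤ nrm ρ u := by
    intro u
    rw [hTu]
    calc 2 * nrm ρ (∑ a ∈ A, Q a u * t a)
        ≤ 2 * ∑ a ∈ A, nrm ρ (Q a u) * nrm ρ (t a) := by
          gcongr
          exact (nrm_sum_le _ _ _).trans (Finset.sum_le_sum fun a _ => nrm_mul_le _ _ _)
      _ = ∑ a ∈ A, nrm ρ (Q a u) * (2 * nrm ρ (t a)) := by
          rw [Finset.mul_sum]; refine Finset.sum_congr rfl fun a _ => by ring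
      _ ≤ ∑ a ∈ A, nrm ρ (Q a u) * (wt ρ a : ℝ≥0) := by
          refine Finset.sum_le_sum fun a ha => ?_
          gcongr
          calc 2 * nrm ρ (t a) ≤ 2 * (((1/2 : ℝ≥0) * wt ρ a : ℝ≥0) : ℝ≥0∞) := by
                gcongr; exact htn a ha
            _ = (wt ρ a : ℝ≥0) := by
                rw [← ENNReal.coe_ofNat, ← ENNReal.coe_mul, ← mul_assoc]; simp
      _ ≤ ∑ a ∈ A, ∑' γ, (if γ ∈ S ∧ sel γ = a then
            ((‖MvPowerSeries.coeff γ u‖₊ * wt ρ γ : ℝ≥0) : ℝ≥0∞) else 0) :=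
          Finset.sum_le_sum fun a _ => nrm_Qop _ _ _ _
      _ = ∑' γ, ∑ a ∈ A, (if γ ∈ S ∧ sel γ = a then
            ((‖MvPowerSeries.coeff γ u‖₊ * wt ρ γ : ℝ≥0) : ℝ≥0∞) else 0) :=
          (Summable.tsum_finsetSum fun _ _ => ENNReal.summable).symm
      _ ≤ nrm ρ u := by
          refine ENNReal.tsum_le_tsum fun γ => ?_
          by_cases hγ : γ ∈ S
          · simp only [hγ, true_and]
            rw [Finset.sum_ite_eq]
            split_ifs <;> simp
          · simp [hγ]
  obtain ⟨u, hu, hun⟩ := neumann ρ hρ N T hcaus hcontr (h : PS n) hnh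
  have hQc : ∀ a, IsConv (Q a u) := fun a => ⟨ρ, hρ, nrm_Qop_lt hρ _ _ hun⟩
  let Qc : Idx n → RC n := fun a => ⟨Q a u, hQc a⟩
  let r : RC n := h - ∑ a ∈ A, Qc a * f a
  have hrI : r ∈ I := I.sub_mem hh (I.sum_mem fun a ha => I.mul_mem_left _ (hfI a ha))
  have hr : ∀ γ ∈ S, MvPowerSeries.coeff γ (r : PS n) = 0 := by
    intro γ hγ
    have e1 : (r : PS n) = u - ∑ a ∈ A, Q a u * MvPowerSeries.monomial a 1 := by
      simp only [r, Qc, AddSubgroupClass.coe_sub, AddSubmonoidClass.coe_finsetSum,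
        MulMemClass.coe_mul, ← hu, hTu, t, mul_sub, Finset.sum_sub_distrib]
      abel
    rw [e1, map_sub, map_sum, Finset.sum_eq_single (sel γ)]
    · rw [MvPowerSeries.coeff_mul_monomial, if_pos (hle γ hγ), coeff_Qop, if_pos]
      · rw [tsub_add_cancel_of_le (hle γ hγ)]; simp
      · rw [tsub_add_cancel_of_le (hle γ hγ)]; exact ⟨hγ, rfl⟩
    · intro a ha hne
      rw [MvPowerSeries.coeff_mul_monomial]
      split_ifs with h1
      · rw [coeff_Qop, if_neg, zero_mul]
        rw [tsub_add_cancel_of_le h1]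
        exact fun h => hne h.2.symm
      · rfl
    · intro h; exact absurd (hsel γ hγ) h
  have hr0 : r = 0 := by
    by_contra h0
    obtain ⟨α, hα, h1⟩ := hS r hrI h0
    exact h1 (hr α hα)
  have : h = ∑ a ∈ A, Qc a * f a := sub_eq_zero.1 hr0
  rw [this]
  refine Submodule.sum_mem _ fun a ha => ?_
  exact Ideal.mul_mem_left _ _ (Ideal.subset_span (by simpa using ⟨a, ha, rfl⟩))

/-- monomial evaluation -/
def mon (x : Fin n → ℂ) (α : Idx n) : ℂ := ∏ i, x i ^ α i

lemma mon_add (x : Fin n → ℂ) (α β : Idx n) : mon x (α + β) = mon x α * mon x β := by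
  simp [mon, pow_add, Finset.prod_mul_distrib]

lemma nnnorm_mon_le {x : Fin n → ℂ} {ρ : Fin n → ℝ≥0} (h : ∀ i, ‖x i‖₊ ≤ ρ i) (α : Idx n) :
    ‖mon x α‖₊ ≤ wt ρ α := by
  rw [mon, wt, nnnorm_prod]
  refine Finset.prod_le_prod' fun i _ => ?_
  rw [nnnorm_pow]
  exact pow_le_pow_left₀ (zero_le) (h i) _

lemma summable_of_nrm {ρ : Fin n → ℝ≥0} {c : PS n} (hc : nrm ρ c < ⊤) :
    Summable fun α => ‖MvPowerSeries.coeff α c‖ * (wt ρ α : ℝ) := by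
  have := ENNReal.tsum_coe_ne_top_iff_summable.1 hc.ne
  exact (NNReal.summable_coe.2 this).congr fun α => by push_cast; rfl

lemma summable_eval {x : Fin n → ℂ} {ρ : Fin n → ℝ≥0} (h : ∀ i, ‖x i‖₊ ≤ ρ i) {c : PS n}
    (hc : nrm ρ c < ⊤) : Summable fun α => ‖MvPowerSeries.coeff α c * mon x α‖ := by
  refine Summable.of_nonneg_of_le (fun _ => norm_nonneg _) (fun α => ?_) (summable_of_nrm hc)
  rw [norm_mul]
  gcongr
  exact_mod_cast nnnorm_mon_le h α

/-- evaluation of a power series -/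
def evalPS (c : PS n) (x : Fin n → ℂ) : ℂ := ∑' α, MvPowerSeries.coeff α c * mon x α

lemma evalPS_mul {x : Fin n → ℂ} {ρ : Fin n → ℝ≥0} (h : ∀ i, ‖x i‖₊ ≤ ρ i) {c d : PS n}
    (hc : nrm ρ c < ⊤) (hd : nrm ρ d < ⊤) : evalPS (c * d) x = evalPS c x * evalPS d x := by
  classical
  have h1 := summable_eval h hc
  have h2 := summable_eval h hd
  have h3 := summable_mul_of_summable_norm h1 h2
  rw [evalPS, evalPS, evalPS, h1.of_norm.tsum_mul_tsum_eq_tsum_sum_antidiagonal h2.of_norm h3]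
  refine tsum_congr fun β => ?_
  rw [MvPowerSeries.coeff_mul, Finset.sum_mul]
  refine Finset.sum_congr rfl fun p hp => ?_
  rw [← Finset.HasAntidiagonal.mem_antidiagonal.1 hp, mon_add]
  ring

lemma evalPS_add {x : Fin n → ℂ} {ρ : Fin n → ℝ≥0} (h : ∀ i, ‖x i‖₊ ≤ ρ i) {c d : PS n}
    (hc : nrm ρ c < ⊤) (hd : nrm ρ d < ⊤) : evalPS (c + d) x = evalPS c x + evalPS d x := by
  have h1 := (summable_eval h hc).of_norm
  have h2 := (summable_eval h hd).of_norm
  rw [evalPS, evalPS, evalPS, ← h1.tsum_add h2]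
  refine tsum_congr fun β => ?_
  rw [map_add, add_mul]

lemma evalPS_monomial (x : Fin n → ℂ) (α : Idx n) (a : ℂ) :
    evalPS (MvPowerSeries.monomial α a) x = a * mon x α := by
  classical
  rw [evalPS, tsum_eq_single α]
  · simp
  · intro β hβ
    simp [MvPowerSeries.coeff_monomial, hβ]

lemma exists_const_radius {ρ : Fin n → ℝ≥0} (h : ∀ i, 0 < ρ i) : ∃ r : ℝ≥0, 0 < r ∧ ∀ i, r ≤ ρ i := by
  rcases isEmpty_or_nonempty (Fin n) with h0 | h0
  · exact ⟨1, one_pos, fun i => h0.elim i⟩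
  · obtain ⟨i, hi⟩ := Finite.exists_min ρ
    exact ⟨ρ i, h i, hi⟩

lemma eventually_le {ρ : Fin n → ℝ≥0} (h : ∀ i, 0 < ρ i) :
    ∀ᶠ x in 𝓝 (0 : Fin n → ℂ), ∀ i, ‖x i‖₊ ≤ ρ i := by
  rw [eventually_all]
  intro i
  have : Tendsto (fun x : Fin n → ℂ => ‖x i‖₊) (𝓝 0) (𝓝 0) := by
    have := ((continuous_apply (A := fun _ : Fin n => ℂ) i).nnnorm).tendsto 0
    simpa using this
  exact this.eventually (Iic_mem_nhds (h i))

lemma wt_const (r : ℝ≥0) (α : Idx n) : wt (fun _ => r) α = r ^ (∑ i, α i) := by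
  rw [wt, Finset.prod_pow_eq_pow_sum]

lemma exists_mon_multilinear (k : ℕ) (α : Idx n) (h : ∑ i, α i = k) :
    ∃ M : ContinuousMultilinearMap ℂ (fun _ : Fin k => (Fin n → ℂ)) ℂ,
      ‖M‖ ≤ 1 ∧ ∀ x, M (fun _ => x) = mon x α := by
  classical
  obtain ⟨s, hs⟩ : ∃ s : Fin k → Fin n, ∀ x : Fin n → ℂ, ∏ j, x (s j) = mon x α := by
    let L := (Finsupp.toMultiset α).toList
    have hL : L.length = k := by
      rw [Multiset.length_toList, Finsupp.card_toMultiset, ← h, Finsupp.sum_fintype]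
      · rfl
      · intro _; rfl
    subst hL
    refine ⟨L.get, fun x => ?_⟩
    rw [← List.prod_ofFn]
    have : List.ofFn (fun j => x (L.get j)) = L.map x := by
      rw [← List.ofFn_get (L.map x)]
      apply List.ext_get <;> simp
    rw [this, ← Multiset.prod_coe, ← Multiset.map_coe, Multiset.coe_toList,
      Finsupp.toMultiset_map, Finsupp.prod_toMultiset, Finsupp.prod_mapDomain_index (by simp)
        (by simp [pow_add]), Finsupp.prod_fintype _ _ (by simp)]
    rfl
  refine ⟨(ContinuousMultilinearMap.mkPiAlgebra ℂ (Fin k) ℂ).compContinuousLinearMap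
    (fun j => ContinuousLinearMap.proj (s j)), ?_, ?_⟩
  · refine ContinuousMultilinearMap.opNorm_le_bound (by norm_num) fun v => ?_
    simp only [ContinuousMultilinearMap.compContinuousLinearMap_apply,
      ContinuousMultilinearMap.mkPiAlgebra_apply, ContinuousLinearMap.proj_apply, norm_prod, one_mul]
    exact Finset.prod_le_prod (fun _ _ => norm_nonneg _) fun j _ => norm_le_pi_norm (v j) (s j)
  · intro x
    simp [hs]

def degEquiv (n : ℕ) : (Σ k : ℕ, {α : Idx n // α ∈ Finset.finsuppAntidiag Finset.univ k}) ≃ Idx n where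
  toFun x := x.2.1
  invFun α := ⟨∑ i, α i, α, by simp [Finset.mem_finsuppAntidiag]⟩
  left_inv := by
    rintro ⟨k, α, h⟩
    obtain rfl : ∑ i, α i = k := by simpa [Finset.mem_finsuppAntidiag] using h
    rfl
  right_inv α := rfl

lemma evalPS_analyticAt {c : PS n} (hc : IsConv c) : AnalyticAt ℂ (evalPS c) 0 := by
  classical
  obtain ⟨ρ, hρ, h1⟩ := hc
  obtain ⟨r, hr, hrρ⟩ := exists_const_radius hρ
  have h2 : nrm (fun _ => r) c < ⊤ := (nrm_mono hrρ c).trans_lt h1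
  choose! M hM1 hM2 using fun k α => exists_mon_multilinear (n := n) k α
  let p : FormalMultilinearSeries ℂ (Fin n → ℂ) ℂ := fun k =>
    ∑ α ∈ Finset.finsuppAntidiag Finset.univ k, MvPowerSeries.coeff α c • M k α
  have hdeg : ∀ (k : ℕ) (α : Idx n), α ∈ Finset.finsuppAntidiag (Finset.univ : Finset (Fin n)) k → ∑ i, α i = k := by
    intro k α h
    simpa [Finset.mem_finsuppAntidiag] using h
  have hpn : ∀ k, ‖p k‖ * (r:ℝ)^k ≤ ∑ α ∈ Finset.finsuppAntidiag Finset.univ k,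
      ‖MvPowerSeries.coeff α c‖ * (wt (fun _ => r) α : ℝ) := by
    intro k
    calc ‖p k‖ * (r:ℝ)^k ≤ (∑ α ∈ Finset.finsuppAntidiag Finset.univ k,
        ‖MvPowerSeries.coeff α c • M k α‖) * (r:ℝ)^k := by gcongr; exact norm_sum_le _ _
      _ ≤ _ := by
        rw [Finset.sum_mul]
        refine Finset.sum_le_sum fun α hα => ?_
        rw [wt_const, hdeg k α hα, norm_smul]
        push_cast
        gcongr
        exact mul_le_of_le_one_right (norm_nonneg _) (hM1 k α (hdeg k α hα))
  have hsum := summable_of_nrm h2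
  have hsum2 : Summable fun k => ∑ α ∈ Finset.finsuppAntidiag Finset.univ k,
      ‖MvPowerSeries.coeff α c‖ * (wt (fun _ => r) α : ℝ) := by
    have := ((degEquiv n).summable_iff.2 hsum).sigma
    refine this.congr fun k => ?_
    rw [tsum_fintype]
    exact Finset.sum_coe_sort (Finset.finsuppAntidiag Finset.univ k)
      (fun α => ‖MvPowerSeries.coeff α c‖ * (wt (fun _ => r) α : ℝ))
  have : HasFPowerSeriesOnBall (evalPS c) p 0 r := by
    refine ⟨?_, by exact_mod_cast hr, ?_⟩
    · refine p.le_radius_of_summable ?_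
      exact Summable.of_nonneg_of_le (fun k => by positivity) hpn hsum2
    · intro y hy
      rw [zero_add]
      have hy' : ∀ i, ‖y i‖₊ ≤ r := by
        intro i
        have h3 : ‖y‖₊ < r := by simpa [Metric.eball, edist_zero_right, enorm] using hy
        exact (nnnorm_le_pi_nnnorm y i).trans h3.le
      have h4 := (summable_eval hy' h2).of_norm
      have h5 := ((degEquiv n).hasSum_iff.2 h4.hasSum).sigma
        (g := fun k => p k fun _ => y) ?_
      · exact h5
      · intro k
        convert! hasSum_fintype _
        rw [show (p k) = ∑ α ∈ Finset.finsuppAntidiag Finset.univ k,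
          MvPowerSeries.coeff α c • M k α from rfl, ContinuousMultilinearMap.sum_apply,
          ← Finset.sum_coe_sort]
        refine Finset.sum_congr rfl fun α _ => ?_
        simp [hM2 k α.1 (hdeg k α.1 α.2), degEquiv]
  exact this.analyticAt

lemma exists_series {f : (Fin n → ℂ) → ℂ} (hf : AnalyticAt ℂ f 0) :
    ∃ c : PS n, IsConv c ∧ ∀ᶠ x in 𝓝 0, evalPS c x = f x := by
  classical
  obtain ⟨p, R, hp⟩ := hf
  let Y := Σ k : ℕ, (Fin k → Fin n)
  let E : Y → Idx n := fun y => ∑ j, Finsupp.single (y.2 j) 1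
  let t : Y → ℂ := fun y => p y.1 (fun j => Pi.single (y.2 j) 1)
  let c : PS n := fun α => ∑' y : {y : Y // E y = α}, t y.1
  have hcc : ∀ α, MvPowerSeries.coeff α c = ∑' y : {y : Y // E y = α}, t y.1 := fun α => rfl
  have hmon : ∀ (x : Fin n → ℂ) (y : Y), mon x (E y) = ∏ j, x (y.2 j) := by
    intro x y
    have hs : ∀ i : Fin n, mon x (Finsupp.single i 1) = x i := by
      intro i
      simp only [mon, Finsupp.single_apply]
      rw [Finset.prod_eq_single i] <;> simp +contextual [eq_comm]
    have : ∀ s : Finset (Fin y.1), mon x (∑ j ∈ s, Finsupp.single (y.2 j) 1) =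
        ∏ j ∈ s, x (y.2 j) := by
      intro s
      induction s using Finset.induction_on with
      | empty => simp [mon]
      | insert a s ha ih => rw [Finset.sum_insert ha, Finset.prod_insert ha, mon_add, hs, ih]
    exact this _
  have hwt : ∀ (r : ℝ≥0) (y : Y), wt (fun _ => r) (E y) = r ^ y.1 := by
    intro r y
    have : ∀ s : Finset (Fin y.1), wt (fun _ => r) (∑ j ∈ s, Finsupp.single (y.2 j) 1) =
        r ^ s.card := by
      intro s
      induction s using Finset.induction_on with
      | empty => simp [wt]
      | insert a s ha ih =>
        rw [Finset.sum_insert ha, wt_add, wt_single, ih, Finset.card_insert_of_notMem ha, pow_succ']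
    simpa using this Finset.univ
  have ht : ∀ y, ‖t y‖ ≤ ‖p y.1‖ := by
    intro y
    refine (ContinuousMultilinearMap.le_opNorm _ _).trans ?_
    refine mul_le_of_le_one_right (norm_nonneg _) ?_
    refine Finset.prod_le_one (fun _ _ => norm_nonneg _) fun j _ => ?_
    rw [Pi.norm_single]; simp
  -- choose a small radius
  obtain ⟨r, hr0, hrR⟩ : ∃ r : ℝ≥0, 0 < r ∧ (((n + 1) * r : ℝ≥0) : ℝ≥0∞) < R := by
    obtain ⟨a, ha0, haR⟩ := ENNReal.lt_iff_exists_nnreal_btwn.1 hp.r_pos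
    have ha0' : 0 < a := by exact_mod_cast ha0
    refine ⟨a / (n + 1), by positivity, ?_⟩
    rwa [mul_div_cancel₀ _ (by positivity)]
  have hsump : Summable fun k => ‖p k‖ * (((n + 1) * r : ℝ≥0) : ℝ) ^ k :=
    p.summable_norm_mul_pow (hrR.trans_le hp.r_le)
  have hsumY : Summable fun y : Y => ‖t y‖ * (r : ℝ) ^ y.1 := by
    rw [summable_sigma_of_nonneg (fun y => by positivity)]
    refine ⟨fun k => (hasSum_fintype _).summable, ?_⟩
    refine Summable.of_nonneg_of_le (fun k => tsum_nonneg fun _ => by positivity) (fun k => ?_) hsump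
    rw [tsum_fintype]
    calc ∑ s : Fin k → Fin n, ‖t ⟨k, s⟩‖ * (r:ℝ)^k ≤ ∑ s : Fin k → Fin n, ‖p k‖ * (r:ℝ)^k :=
          Finset.sum_le_sum fun s _ => by gcongr; exact ht ⟨k, s⟩
      _ = (n:ℝ)^k * (‖p k‖ * (r:ℝ)^k) := by simp
      _ ≤ ((n:ℝ)+1)^k * (‖p k‖ * (r:ℝ)^k) := by gcongr; linarith
      _ = _ := by push_cast; rw [mul_pow]; ring
  refine ⟨c, ⟨fun _ => r, fun _ => hr0, ?_⟩, ?_⟩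
  · have h1 : (∑' y : Y, ((‖t y‖₊ * r ^ y.1 : ℝ≥0) : ℝ≥0∞)) < ⊤ := by
      rw [lt_top_iff_ne_top, ENNReal.tsum_coe_ne_top_iff_summable]
      exact NNReal.summable_coe.1 (hsumY.congr fun y => by push_cast; rfl)
    refine lt_of_le_of_lt ?_ h1
    rw [← (Equiv.sigmaFiberEquiv E).tsum_eq, ENNReal.tsum_sigma', nrm]
    refine ENNReal.tsum_le_tsum fun α => ?_
    have h2 : ((‖MvPowerSeries.coeff α c‖₊ : ℝ≥0) : ℝ≥0∞) ≤
        ∑' y : {y : Y // E y = α}, ((‖t y.1‖₊ : ℝ≥0) : ℝ≥0∞) := by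
      rw [hcc]
      change ‖∑' y : {y : Y // E y = α}, t y.1‖ₑ ≤ ∑' y : {y : Y // E y = α}, ‖t y.1‖ₑ
      exact enorm_tsum_le_tsum_enorm
    rw [ENNReal.coe_mul]
    refine (mul_le_mul_left h2 _).trans ?_
    rw [← ENNReal.tsum_mul_right]
    refine ENNReal.tsum_le_tsum fun y => ?_
    have h3 : wt (fun _ => r) α = r ^ y.1.1 := by rw [← hwt, y.2]
    rw [← ENNReal.coe_mul, h3]
    rfl
  · have hb : ∀ᶠ x in 𝓝 (0 : Fin n → ℂ), x ∈ Metric.eball (0 : Fin n → ℂ) R :=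
      Metric.eball_mem_nhds _ hp.r_pos
    filter_upwards [hb, eventually_le (n := n) (ρ := fun _ => r) (fun _ => hr0)] with x hxR hxr
    have hs : Summable fun y : Y => t y * mon x (E y) := by
      refine Summable.of_norm (Summable.of_nonneg_of_le (fun _ => norm_nonneg _) (fun y => ?_) hsumY)
      rw [norm_mul]
      gcongr
      have := nnnorm_mon_le hxr (E y)
      rw [hwt] at this
      exact_mod_cast this
    have h1 : evalPS c x = ∑' y : Y, t y * mon x (E y) := by
      have e1 := (Equiv.sigmaFiberEquiv E).tsum_eq (fun y : Y => t y * mon x (E y))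
      have e2 := Summable.tsum_sigma ((Equiv.sigmaFiberEquiv E).summable_iff.2 hs)
      refine Eq.trans ?_ (e2.symm.trans e1)
      rw [evalPS]
      refine tsum_congr fun α => ?_
      rw [hcc, ← tsum_mul_right]
      refine tsum_congr fun y => ?_
      have := y.2
      change _ = t y.1 * mon x (E y.1)
      rw [this]
    rw [h1, Summable.tsum_sigma hs]
    have h2 := (hp.hasSum hxR).tsum_eq
    rw [zero_add] at h2
    rw [← h2]
    refine tsum_congr fun k => ?_
    rw [tsum_fintype]
    have h3 : x = ∑ i, x i • (Pi.single i (1:ℂ) : Fin n → ℂ) := by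
      funext j; simp [Finset.sum_apply, Pi.single_apply]
    conv_rhs => rw [h3]
    rw [ContinuousMultilinearMap.map_sum]
    refine Finset.sum_congr rfl fun s _ => ?_
    rw [ContinuousMultilinearMap.map_smul_univ, hmon, smul_eq_mul, mul_comm]

/-- Evaluation of convergent power series as germs. -/
def ev (n : ℕ) : RC n →ₐ[ℂ] On n where
  toFun c := mkOn (evalPS c.1) (evalPS_analyticAt c.2)
  map_one' := by
    apply Subtype.ext
    refine Filter.Germ.coe_eq.2 (Eventually.of_forall fun x => ?_)
    have := evalPS_monomial x 0 1
    simpa [mon] using this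
  map_zero' := by
    apply Subtype.ext
    refine Filter.Germ.coe_eq.2 (Eventually.of_forall fun x => ?_)
    simp [evalPS]
  map_mul' c d := by
    apply Subtype.ext
    obtain ⟨ρ, h0, h1, h2⟩ := exists_common c.2 d.2
    refine Filter.Germ.coe_eq.2 ((eventually_le h0).mono fun x hx => ?_)
    exact evalPS_mul hx h1 h2
  map_add' c d := by
    apply Subtype.ext
    obtain ⟨ρ, h0, h1, h2⟩ := exists_common c.2 d.2
    refine Filter.Germ.coe_eq.2 ((eventually_le h0).mono fun x hx => ?_)
    exact evalPS_add hx h1 h2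
  commutes' r := by
    apply Subtype.ext
    refine Filter.Germ.coe_eq.2 (Eventually.of_forall fun x => ?_)
    have := evalPS_monomial x 0 r
    have h2 : ((algebraMap ℂ (RC n) r : RC n) : PS n) = MvPowerSeries.monomial 0 r := by
      rw [MvPowerSeries.monomial_zero_eq_C_apply]; rfl
    rw [h2, this]
    simp [mon]

lemma ev_surjective : Function.Surjective (ev n) := by
  intro g
  obtain ⟨c, hc, h⟩ := exists_series (On.rep_analyticAt g)
  refine ⟨⟨c, hc⟩, Subtype.ext ?_⟩
  rw [← On.rep_spec g]
  exact Filter.Germ.coe_eq.2 h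

lemma ev_X (i : Fin n) : ev n ⟨MvPowerSeries.X i, X_mem_RC i⟩ = coordG i := by
  apply Subtype.ext
  refine Filter.Germ.coe_eq.2 (Eventually.of_forall fun x => ?_)
  have := evalPS_monomial x (Finsupp.single i 1) 1
  have hs : mon x (Finsupp.single i 1) = x i := by
    classical
    simp only [mon, Finsupp.single_apply]
    rw [Finset.prod_eq_single i] <;> simp +contextual [eq_comm]
  rw [hs, one_mul] at this
  exact this

instance On_noetherian : IsNoetherianRing (On n) :=
  isNoetherianRing_of_surjective (RC n) (On n) (ev n).toRingHom ev_surjective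

lemma rep_mkOn (f : (Fin n → ℂ) → ℂ) (hf : AnalyticAt ℂ f 0) : On.rep (mkOn f hf) =ᶠ[𝓝 0] f :=
  Filter.Germ.coe_eq.1 (On.rep_spec (mkOn f hf))

lemma On_ext {a b : On n} (h : On.rep a =ᶠ[𝓝 0] On.rep b) : a = b := by
  apply Subtype.ext
  rw [← On.rep_spec a, ← On.rep_spec b]
  exact Filter.Germ.coe_eq.2 h

lemma mkOn_eq {f : (Fin n → ℂ) → ℂ} {hf : AnalyticAt ℂ f 0} {b : On n}
    (h : f =ᶠ[𝓝 0] On.rep b) : mkOn f hf = b :=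
  On_ext ((rep_mkOn f hf).trans h)

lemma rep_add (a b : On n) : On.rep (a + b) =ᶠ[𝓝 0] On.rep a + On.rep b := by
  apply Filter.Germ.coe_eq.1
  rw [Filter.Germ.coe_add, On.rep_spec, On.rep_spec, On.rep_spec]
  rfl

lemma rep_mul (a b : On n) : On.rep (a * b) =ᶠ[𝓝 0] On.rep a * On.rep b := by
  apply Filter.Germ.coe_eq.1
  rw [Filter.Germ.coe_mul, On.rep_spec, On.rep_spec, On.rep_spec]
  rfl

lemma rep_smul (c : ℂ) (a : On n) : On.rep (c • a) =ᶠ[𝓝 0] fun x => c * On.rep a x := by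
  apply Filter.Germ.coe_eq.1
  rw [On.rep_spec]
  have : ((c • a : On n) : Filter.Germ (𝓝 (0 : Fin n → ℂ)) ℂ) = c • (a : Filter.Germ _ ℂ) := rfl
  rw [this, ← On.rep_spec a]
  rfl

lemma rep_algebraMap (c : ℂ) : On.rep (algebraMap ℂ (On n) c) =ᶠ[𝓝 0] fun _ => c := by
  apply Filter.Germ.coe_eq.1
  rw [On.rep_spec]
  rfl

/-- evaluation at the origin as an algebra map -/
def ev0A (n : ℕ) : On n →ₐ[ℂ] ℂ where
  toFun := ev0
  map_one' := by
    have := (rep_algebraMap (n := n) 1).self_of_nhds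
    rwa [map_one] at this
  map_zero' := by
    have := (rep_algebraMap (n := n) 0).self_of_nhds
    rwa [map_zero] at this
  map_mul' a b := (rep_mul a b).self_of_nhds
  map_add' a b := (rep_add a b).self_of_nhds
  commutes' c := (rep_algebraMap c).self_of_nhds

lemma ev0A_apply (g : On n) : ev0A n g = ev0 g := rfl

lemma ev0_mkOn (f : (Fin n → ℂ) → ℂ) (hf : AnalyticAt ℂ f 0) : ev0 (mkOn f hf) = f 0 :=
  (rep_mkOn f hf).self_of_nhds

lemma mem_mId {g : On n} : g ∈ mId n ↔ ev0A n g = 0 := by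
  rw [mId, RingHom.mem_ker]
  have : restrictOn n (pure_le_nhds (0 : Fin n → ℂ)) g =
      ((On.rep g : (Fin n → ℂ) → ℂ) : Filter.Germ (pure (0 : Fin n → ℂ)) ℂ) := by
    have h : restrictOn n (pure_le_nhds (0 : Fin n → ℂ)) g =
      (g : Filter.Germ (𝓝 (0 : Fin n → ℂ)) ℂ).compTendsto id
        (Filter.tendsto_id'.2 (pure_le_nhds (0 : Fin n → ℂ))) := rfl
    rw [h, ← On.rep_spec g]
    rfl
  rw [this]
  refine Filter.Germ.coe_eq.trans ?_
  simp [Filter.EventuallyEq, ev0A_apply, ev0]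

lemma IX_le_mId {X : Set (Fin n → ℂ)} (h0 : (0 : Fin n → ℂ) ∈ X) : IX n X ≤ mId n := by
  intro g hg
  rw [IX, RingHom.mem_ker] at hg
  rw [mem_mId]
  have : restrictOn n (nhdsWithin_le_nhds (s := X) (a := (0 : Fin n → ℂ))) g =
      ((On.rep g : (Fin n → ℂ) → ℂ) : Filter.Germ (𝓝[X] (0 : Fin n → ℂ)) ℂ) := by
    have h : restrictOn n (nhdsWithin_le_nhds (s := X) (a := (0 : Fin n → ℂ))) g =
      (g : Filter.Germ (𝓝 (0 : Fin n → ℂ)) ℂ).compTendsto id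
        (Filter.tendsto_id'.2 (nhdsWithin_le_nhds (s := X))) := rfl
    rw [h, ← On.rep_spec g]
    rfl
  rw [this] at hg
  have h2 : On.rep g =ᶠ[𝓝[X] 0] 0 := Filter.Germ.coe_eq.1 hg
  exact h2.self_of_nhdsWithin h0

lemma isUnit_On {g : On n} (h : ev0A n g ≠ 0) : IsUnit g := by
  have h' : On.rep g 0 ≠ 0 := h
  have hi : AnalyticAt ℂ (fun x => (On.rep g x)⁻¹) 0 := (On.rep_analyticAt g).fun_inv h'
  refine IsUnit.of_mul_eq_one (mkOn _ hi) ?_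
  apply On_ext
  have h1 := rep_algebraMap (n := n) 1
  rw [map_one] at h1
  refine (rep_mul _ _).trans (EventuallyEq.trans ?_ h1.symm)
  have h2 := rep_mkOn _ hi
  have h3 := (On.rep_analyticAt g).continuousAt.eventually_ne h'
  filter_upwards [h2, h3] with x hx hx3
  simp [hx, hx3]

lemma isUnit_On_iff {g : On n} : IsUnit g ↔ ev0A n g ≠ 0 :=
  ⟨fun h => (h.map (ev0A n)).ne_zero, isUnit_On⟩

instance : Nontrivial (On n) := (ev0A n).toRingHom.domain_nontrivial

instance On_local : IsLocalRing (On n) := by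
  refine IsLocalRing.of_nonunits_add fun a b ha hb => ?_
  rw [mem_nonunits_iff, isUnit_On_iff, not_not] at *
  rw [map_add, ha, hb, add_zero]

lemma maximalIdeal_On : IsLocalRing.maximalIdeal (On n) = mId n := by
  ext g
  rw [IsLocalRing.mem_maximalIdeal, mem_nonunits_iff, isUnit_On_iff, not_not, mem_mId]

lemma mId_ne_top : mId n ≠ ⊤ := by
  rw [← maximalIdeal_On]; exact (IsLocalRing.maximalIdeal.isMaximal _).ne_top

lemma closed_ideal (I : Ideal (On n)) {g : On n} (h : ∀ K, g ∈ I ⊔ mId n ^ K) : g ∈ I := by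
  have h1 := Ideal.iInf_pow_smul_eq_bot_of_isLocalRing (M := On n ⧸ I) (mId n) mId_ne_top
  have h2 : (Submodule.Quotient.mk g : On n ⧸ I) ∈
      ⨅ i : ℕ, mId n ^ i • (⊤ : Submodule (On n) (On n ⧸ I)) := by
    rw [Submodule.mem_iInf]
    intro K
    obtain ⟨a, ha, b, hb, rfl⟩ := Submodule.mem_sup.1 (h K)
    have : (Submodule.Quotient.mk (a + b) : On n ⧸ I) = b • Submodule.Quotient.mk 1 := by
      rw [Submodule.Quotient.mk_add, (Submodule.Quotient.mk_eq_zero I).2 ha, zero_add,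
        ← Submodule.Quotient.mk_smul]
      simp
    rw [this]
    exact Submodule.smul_mem_smul hb trivial
  rw [h1] at h2
  exact (Submodule.Quotient.mk_eq_zero I).1 ((Submodule.mem_bot _).1 h2)

lemma eq_zero_of_mem_pow {g : On n} (h : ∀ K, g ∈ mId n ^ K) : g = 0 := by
  have := closed_ideal ⊥ (g := g) (fun K => by simpa using h K)
  simpa using this

lemma rep_pd (i : Fin n) (g : On n) :
    On.rep (pd i g) =ᶠ[𝓝 0] fun x => fderiv ℂ (On.rep g) x (Pi.single i 1) := rep_mkOn _ _

lemma pd_eq_of {i : Fin n} {a : On n} {f : (Fin n → ℂ) → ℂ} (h : On.rep a =ᶠ[𝓝 0] f) :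
    On.rep (pd i a) =ᶠ[𝓝 0] fun x => fderiv ℂ f x (Pi.single i 1) := by
  refine (rep_pd i a).trans ?_
  filter_upwards [h.fderiv (𝕜 := ℂ)] with x hx
  rw [hx]

lemma rep_diff (a : On n) : ∀ᶠ x in 𝓝 (0 : Fin n → ℂ), DifferentiableAt ℂ (On.rep a) x :=
  (On.rep_analyticAt a).eventually_analyticAt.mono fun _ h => h.differentiableAt

/-- partial derivatives as derivations -/
def pdD (i : Fin n) : Derivation ℂ (On n) (On n) :=
  Derivation.mk' 
    { toFun := pd i
      map_add' := fun a b => by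
        apply On_ext
        refine (pd_eq_of (rep_add a b)).trans (EventuallyEq.trans ?_ (rep_add _ _).symm)
        filter_upwards [rep_pd i a, rep_pd i b, rep_diff a, rep_diff b] with x h1 h2 h3 h4
        simp [h1, h2, fderiv_add h3 h4]
      map_smul' := fun c a => by
        apply On_ext
        refine (pd_eq_of (rep_smul c a)).trans (EventuallyEq.trans ?_ (rep_smul _ _).symm)
        filter_upwards [rep_pd i a, rep_diff a] with x h1 h3
        simp [h1, fderiv_const_mul h3] }
    (fun a b => by
        apply On_ext
        change On.rep (pd i (a * b)) =ᶠ[𝓝 0] On.rep (a * pd i b + b * pd i a)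
        refine (pd_eq_of (rep_mul a b)).trans (EventuallyEq.trans ?_ (rep_add _ _).symm)
        filter_upwards [rep_pd i a, rep_pd i b, rep_diff a, rep_diff b, rep_mul a (pd i b),
          rep_mul b (pd i a)] with x h1 h2 h3 h4 h5 h6
        simp [h1, h2, h5, h6, fderiv_mul h3 h4])

lemma pdD_apply (i : Fin n) (g : On n) : pdD i g = pd i g := rfl

lemma pd_coordG (i j : Fin n) : pd i (coordG j) = if i = j then 1 else 0 := by
  have h : On.rep (pd i (coordG j)) =ᶠ[𝓝 0] fun _ => if i = j then 1 else 0 := by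
    refine (pd_eq_of (rep_mkOn _ _)).trans (Eventually.of_forall fun x => ?_)
    have : fderiv ℂ (fun x : Fin n → ℂ => x j) x =
      ContinuousLinearMap.proj (R := ℂ) (φ := fun _ : Fin n => ℂ) j :=
      (ContinuousLinearMap.proj (R := ℂ) (φ := fun _ : Fin n => ℂ) j).fderiv
    beta_reduce
    rw [this]
    simp [Pi.single_apply, eq_comm]
  have h2 := rep_algebraMap (n := n) (if i = j then 1 else 0)
  have := On_ext (h.trans h2.symm)
  rw [this]
  split_ifs <;> simp

/-- vector fields as derivations -/
def vfD (δ : Fin n → On n) : Derivation ℂ (On n) (On n) := ∑ i, δ i • pdD i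

lemma vfD_apply (δ : Fin n → On n) (g : On n) : vfD δ g = applyVF δ g := by
  rw [vfD, applyVF, ← Derivation.coeFnAddMonoidHom_apply, map_sum, Finset.sum_apply]
  rfl

lemma vfD_coordG (δ : Fin n → On n) (j : Fin n) : vfD δ (coordG j) = δ j := by
  rw [vfD_apply, applyVF]
  simp [pd_coordG]

lemma der_zero {R : Type*} [CommRing R] [Algebra ℂ R] (F : R →ₐ[ℂ] On n) (E : R →ₗ[ℂ] On n)
    (hE : ∀ a b, E (a * b) = F a * E b + F b * E a) {ι : Type*} [Fintype ι] (x : ι → R)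
    (hx : ∀ r, ∃ (c : ℂ) (a : ι → R), r = algebraMap ℂ R c + ∑ i, a i * x i)
    (hEx : ∀ i, E (x i) = 0) (hF : ∀ i, F (x i) ∈ mId n) (r : R) : E r = 0 := by
  have h1 : E 1 = 0 := by
    have := hE 1 1
    simpa using this
  have hK : ∀ K : ℕ, ∀ r, E r ∈ mId n ^ K := by
    intro K
    induction K with
    | zero => intro r; simp
    | succ K ih =>
      intro r
      obtain ⟨c, a, rfl⟩ := hx r
      rw [map_add, Algebra.algebraMap_eq_smul_one, map_smul, h1, smul_zero, zero_add, map_sum]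
      refine Ideal.sum_mem _ fun i _ => ?_
      rw [hE, hEx, mul_zero, zero_add, pow_succ']
      exact Ideal.mul_mem_mul (hF i) (ih _)
  exact eq_zero_of_mem_pow fun K => hK K r

lemma der_ext {D D' : Derivation ℂ (On n) (On n)} {ι : Type*} [Fintype ι] (x : ι → On n)
    (hx : mId n = Ideal.span (Set.range x)) (h : ∀ i, D (x i) = D' (x i)) (g : On n) : D g = D' g := by
  have := der_zero (AlgHom.id ℂ (On n)) ((D - D' : Derivation ℂ (On n) (On n)) : On n →ₗ[ℂ] On n)
    (fun a b => (D - D').leibniz a b) x ?_ (fun i => by simp [h]) (fun i => ?_) g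
  · simpa [sub_eq_zero] using this
  · intro r
    have h1 : r - algebraMap ℂ (On n) (ev0A n r) ∈ mId n := by rw [mem_mId]; simp
    rw [hx, Ideal.mem_span_range_iff_exists_fun] at h1
    obtain ⟨a, ha⟩ := h1
    exact ⟨ev0A n r, a, by rw [ha]; ring⟩
  · rw [hx]; exact Ideal.subset_span ⟨i, rfl⟩

/-- order at least `M` -/
def ordGE (M : ℕ) (c : PS n) : Prop := ∀ α : Idx n, ∑ i, α i < M → MvPowerSeries.coeff α c = 0

/-- coordinates in the convergent power series ring -/
def XR (i : Fin n) : RC n := ⟨MvPowerSeries.X i, X_mem_RC i⟩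

lemma exists_dec_RC (c : RC n) (M : ℕ) (hc : ordGE (M + 1) c.1) :
    ∃ a : Fin n → RC n, (∀ i, ordGE M (a i).1) ∧ c = ∑ i, a i * XR i := by
  classical
  let P : Fin n → Idx n → Prop := fun i γ => γ i ≠ 0 ∧ ∀ k < i, γ k = 0
  obtain ⟨ρ, hρ, h1⟩ := c.2
  refine ⟨fun i => ⟨Qop (P i) (Finsupp.single i 1) c.1, ρ, hρ, nrm_Qop_lt hρ _ _ h1⟩, ?_, ?_⟩
  · intro i β hβ
    change MvPowerSeries.coeff β (Qop (P i) (Finsupp.single i 1) c.1) = 0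
    rw [coeff_Qop]
    split_ifs
    · apply hc
      simp only [Finsupp.add_apply, Finset.sum_add_distrib]
      have : ∑ x : Fin n, (Finsupp.single i 1 : Idx n) x = 1 := by
        simp [Finsupp.single_apply]
      omega
    · rfl
  · apply Subtype.ext
    ext γ
    rw [AddSubmonoidClass.coe_finsetSum, map_sum]
    have h2 : ∀ i, MvPowerSeries.coeff γ (Qop (P i) (Finsupp.single i 1) c.1 *
        (MvPowerSeries.X i : PS n)) = if P i γ then MvPowerSeries.coeff γ c.1 else 0 := by
      intro i
      rw [MvPowerSeries.X, MvPowerSeries.coeff_mul_monomial, mul_one]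
      by_cases h : Finsupp.single i 1 ≤ γ
      · rw [if_pos h, coeff_Qop, tsub_add_cancel_of_le h]
      · rw [if_neg h, if_neg]
        intro h3
        apply h
        rw [Finsupp.single_le_iff]
        exact Nat.one_le_iff_ne_zero.2 h3.1
    have h3 : ∀ i, MvPowerSeries.coeff γ ((⟨Qop (P i) (Finsupp.single i 1) c.1, ρ, hρ,
      nrm_Qop_lt hρ _ _ h1⟩ : RC n) * XR i : RC n).1 =
        if P i γ then MvPowerSeries.coeff γ c.1 else 0 := h2
    rw [Finset.sum_congr rfl fun i _ => h3 i]
    by_cases hγ : γ = 0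
    · subst hγ
      have := hc 0 (by simp)
      simp [this]
    · have hex : ∃ i, γ i ≠ 0 := by
        by_contra hcon
        push Not at hcon
        exact hγ (Finsupp.ext hcon)
      let s := Finset.univ.filter fun i => γ i ≠ 0
      have hs : s.Nonempty := by
        obtain ⟨i, hi⟩ := hex
        exact ⟨i, by simp [s, hi]⟩
      have hmem := s.min'_mem hs
      have hP : P (s.min' hs) γ := by
        refine ⟨(Finset.mem_filter.1 hmem).2, fun k hk => ?_⟩
        by_contra hcon
        have : s.min' hs ≤ k := s.min'_le k (by simp [s, hcon])
        exact absurd hk (not_lt.2 this)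
      rw [Finset.sum_eq_single (s.min' hs)]
      · rw [if_pos hP]
      · intro j _ hj
        rw [if_neg]
        intro hPj
        have : s.min' hs ≤ j := s.min'_le j (by simp [s, hPj.1])
        rcases this.lt_or_eq with h | h
        · exact hP.1 (hPj.2 _ h)
        · exact hj h.symm
      · simp

/-- the maximal ideal of the convergent power series ring -/
def mR (n : ℕ) : Ideal (RC n) := Ideal.span (Set.range XR)

lemma mem_mR_pow {M : ℕ} : ∀ {c : RC n}, ordGE M c.1 → c ∈ mR n ^ M := by
  induction M with
  | zero => intro c _; simp
  | succ M ih =>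
    intro c hc
    obtain ⟨a, h1, rfl⟩ := exists_dec_RC c M hc
    refine Ideal.sum_mem _ fun i _ => ?_
    rw [pow_succ]
    exact Ideal.mul_mem_mul (ih (h1 i)) (Ideal.subset_span ⟨i, rfl⟩)

lemma ordGE_mul {a b : PS n} {M N : ℕ} (ha : ordGE M a) (hb : ordGE N b) : ordGE (M + N) (a * b) := by
  classical
  intro α hα
  rw [MvPowerSeries.coeff_mul]
  refine Finset.sum_eq_zero fun p hp => ?_
  rw [Finset.HasAntidiagonal.mem_antidiagonal] at hp
  have : ∑ i, p.1 i + ∑ i, p.2 i < M + N := by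
    rw [← Finset.sum_add_distrib]
    convert! hα using 2 with i
    rw [← hp]; simp
  by_cases h : ∑ i, p.1 i < M
  · rw [ha _ h, zero_mul]
  · rw [hb _ (by omega), mul_zero]

lemma ordGE_add {a b : PS n} {M : ℕ} (ha : ordGE M a) (hb : ordGE M b) : ordGE M (a + b) := by
  intro α hα
  rw [map_add, ha α hα, hb α hα, add_zero]

lemma ordGE_sum {ι : Type*} (s : Finset ι) {a : ι → PS n} {M : ℕ} (h : ∀ i ∈ s, ordGE M (a i)) :
    ordGE M (∑ i ∈ s, a i) := by
  intro α hα
  rw [map_sum]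
  exact Finset.sum_eq_zero fun i hi => h i hi α hα

lemma ordGE_zero (a : PS n) : ordGE 0 a := fun _ h => absurd h (by omega)

lemma ordGE_XR (i : Fin n) : ordGE 1 (XR i).1 := by
  classical
  intro α hα
  have : α = 0 := by
    ext j
    have : α j ≤ ∑ i, α i := Finset.single_le_sum (fun _ _ => Nat.zero_le _) (Finset.mem_univ j)
    simp; omega
  subst this
  change MvPowerSeries.coeff 0 (MvPowerSeries.X i : PS n) = 0
  simp

lemma ordGE_of_mem {M : ℕ} : ∀ {c : RC n}, c ∈ mR n ^ M → ordGE M c.1 := by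
  induction M with
  | zero => intro c _; exact ordGE_zero _
  | succ M ih =>
    intro c hc
    rw [pow_succ] at hc
    refine Submodule.mul_induction_on hc ?_ ?_
    · intro a ha b hb
      refine ordGE_mul (ih ha) ?_
      rw [mR, Ideal.mem_span_range_iff_exists_fun] at hb
      obtain ⟨r, rfl⟩ := hb
      rw [AddSubmonoidClass.coe_finsetSum]
      refine ordGE_sum _ fun i _ => ?_
      have := ordGE_mul (ordGE_zero (r i).1) (ordGE_XR i)
      rwa [zero_add] at this
    · intro a b ha hb
      exact ordGE_add ha hb

lemma RC_dec (c : RC n) : ∃ (r : ℂ) (a : Fin n → RC n), c = algebraMap ℂ (RC n) r + ∑ i, a i * XR i := by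
  classical
  have hcoe : ((c - algebraMap ℂ (RC n) (MvPowerSeries.coeff 0 c.1) : RC n) : PS n) =
      c.1 - MvPowerSeries.monomial 0 (MvPowerSeries.coeff 0 c.1) := by
    rw [MvPowerSeries.monomial_zero_eq_C_apply]; rfl
  obtain ⟨a, -, ha⟩ := exists_dec_RC (c - algebraMap ℂ (RC n) (MvPowerSeries.coeff 0 c.1)) 0 (by
    intro α hα
    have : α = 0 := by
      ext j
      have : α j ≤ ∑ i, α i := Finset.single_le_sum (fun _ _ => Nat.zero_le _) (Finset.mem_univ j)
      simp; omega
    subst this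
    rw [hcoe]
    simp)
  exact ⟨_, a, by rw [← ha]; ring⟩

lemma coordG_mem (i : Fin n) : coordG i ∈ mId n := by
  rw [mem_mId, ev0A_apply]; exact (ev0_mkOn _ _).trans rfl

lemma mId_eq : mId n = Ideal.span (Set.range (coordG (n := n))) := by
  apply le_antisymm
  · intro g hg
    obtain ⟨c, rfl⟩ := ev_surjective g
    obtain ⟨r, a, rfl⟩ := RC_dec c
    have h1 : ev n (algebraMap ℂ (RC n) r + ∑ i, a i * XR i) =
        algebraMap ℂ (On n) r + ∑ i, ev n (a i) * coordG i := by
      rw [map_add, AlgHom.commutes, map_sum]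
      congr 1
      refine Finset.sum_congr rfl fun i _ => ?_
      rw [map_mul, XR, ev_X]
    rw [h1] at hg ⊢
    have h2 : ∑ i, ev n (a i) * coordG i ∈ Ideal.span (Set.range (coordG (n := n))) :=
      Ideal.sum_mem _ fun i _ => Ideal.mul_mem_left _ _ (Ideal.subset_span ⟨i, rfl⟩)
    rw [mem_mId, map_add, AlgHom.commutes, map_sum] at hg
    have h3 : ∑ i, ev0A n (ev n (a i) * coordG i) = 0 := Finset.sum_eq_zero fun i _ => by
      rw [map_mul, mem_mId.1 (coordG_mem i), mul_zero]
    rw [h3, add_zero] at hg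
    have : r = 0 := hg
    rw [this, map_zero, zero_add]
    exact h2
  · rw [Ideal.span_le]
    rintro _ ⟨i, rfl⟩
    exact coordG_mem i

lemma On_dec {ι : Type*} [Fintype ι] {y : ι → On n} (hy : mId n = Ideal.span (Set.range y)) (r : On n) :
    ∃ (c : ℂ) (a : ι → On n), r = algebraMap ℂ (On n) c + ∑ i, a i * y i := by
  have h1 : r - algebraMap ℂ (On n) (ev0A n r) ∈ mId n := by rw [mem_mId]; simp
  rw [hy, Ideal.mem_span_range_iff_exists_fun] at h1
  obtain ⟨a, ha⟩ := h1
  exact ⟨ev0A n r, a, by rw [ha]; ring⟩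

/-- powers of the maximal ideal as complex subspaces -/
def mC (n K : ℕ) : Submodule ℂ (On n) := (mId n ^ K).restrictScalars ℂ

lemma mem_mC {K : ℕ} {g : On n} : g ∈ mC n K ↔ g ∈ mId n ^ K := Iff.rfl

lemma mC_mul_le (a b : ℕ) : mC n a * mC n b ≤ mC n (a + b) := by
  rw [Submodule.mul_le]
  intro x hx y hy
  rw [mem_mC, pow_add]
  exact Ideal.mul_mem_mul hx hy

lemma mC_anti {a b : ℕ} (h : a ≤ b) : mC n b ≤ mC n a := Ideal.pow_le_pow_right h

lemma mC_succ (a : ℕ) : mC n (a + 1) ≤ mC n a * mC n 1 := by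
  intro g hg
  rw [mem_mC, pow_succ] at hg
  refine Submodule.mul_induction_on hg ?_ fun x y hx hy => add_mem hx hy
  intro x hx y hy
  exact Submodule.mul_mem_mul hx (by rw [mem_mC, pow_one]; exact hy)

/-- the span of a coordinate system -/
def Sy {ι : Type*} (y : ι → On n) : Submodule ℂ (On n) := Submodule.span ℂ (Set.range y)

lemma Sy_le {ι : Type*} [Fintype ι] {y : ι → On n} (hy : mId n = Ideal.span (Set.range y)) : Sy y ≤ mC n 1 := by
  rw [Sy, Submodule.span_le]
  rintro _ ⟨i, rfl⟩
  change y i ∈ mId n ^ 1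
  rw [pow_one, hy]
  exact Ideal.subset_span ⟨i, rfl⟩

lemma Sy_pow_le {ι : Type*} [Fintype ι] {y : ι → On n} (hy : mId n = Ideal.span (Set.range y)) (K : ℕ) :
    Sy y ^ K ≤ mC n K := by
  induction K with
  | zero => intro g _; simp [mem_mC]
  | succ K ih =>
    rw [pow_succ]
    exact (mul_le_mul' ih (Sy_le hy)).trans (mC_mul_le _ _)

lemma mC_le_one {ι : Type*} [Fintype ι] {y : ι → On n} (hy : mId n = Ideal.span (Set.range y)) :
    mC n 1 ≤ Sy y ⊔ mC n 2 := by
  intro g hg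
  rw [mem_mC, pow_one] at hg
  rw [hy, Ideal.mem_span_range_iff_exists_fun] at hg
  obtain ⟨a, rfl⟩ := hg
  refine Submodule.sum_mem _ fun i _ => ?_
  have hyi : y i ∈ mC n 1 := Sy_le hy (Submodule.subset_span ⟨i, rfl⟩)
  have : a i * y i = ev0A n (a i) • y i + (a i - algebraMap ℂ (On n) (ev0A n (a i))) * y i := by
    rw [Algebra.smul_def]; ring
  rw [this]
  refine Submodule.add_mem_sup (Submodule.smul_mem _ _ (Submodule.subset_span ⟨i, rfl⟩)) ?_
  refine mC_mul_le 1 1 (Submodule.mul_mem_mul ?_ hyi)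
  rw [mem_mC, pow_one, mem_mId]
  simp

lemma mC_le {ι : Type*} [Fintype ι] {y : ι → On n} (hy : mId n = Ideal.span (Set.range y)) (K : ℕ) :
    mC n K ≤ Sy y ^ K ⊔ mC n (K + 1) := by
  induction K with
  | zero =>
    intro g _
    have : g = algebraMap ℂ (On n) (ev0A n g) + (g - algebraMap ℂ (On n) (ev0A n g)) := by ring
    rw [this]
    refine Submodule.add_mem_sup ?_ ?_
    · rw [pow_zero]; exact Submodule.algebraMap_mem _
    · rw [mem_mC, zero_add, pow_one, mem_mId]; simp
  | succ K ih =>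
    refine (mC_succ K).trans ((mul_le_mul' ih (mC_le_one hy)).trans ?_)
    rw [Submodule.sup_mul, Submodule.mul_sup, Submodule.mul_sup]
    refine sup_le (sup_le ?_ ?_) (sup_le ?_ ?_)
    · rw [← pow_succ]; exact le_sup_left
    · refine le_sup_of_le_right ((mul_le_mul' (Sy_pow_le hy K) le_rfl).trans ?_)
      exact mC_mul_le K 2
    · refine le_sup_of_le_right ((mul_le_mul' le_rfl (Sy_le hy)).trans ?_)
      exact mC_mul_le (K + 1) 1
    · refine le_sup_of_le_right ((mC_mul_le (K + 1) 2).trans (mC_anti (by omega)))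

lemma Sy_fg {ι : Type*} [Fintype ι] (y : ι → On n) : (Sy y).FG :=
  Submodule.fg_span (Set.finite_range y)

lemma exists_fg (K : ℕ) : ∃ N : Submodule ℂ (On n), N.FG ∧ ⊤ ≤ N ⊔ mC n K := by
  induction K with
  | zero => exact ⟨⊥, Submodule.fg_bot, fun g _ => Submodule.mem_sup_right (by simp [mem_mC])⟩
  | succ K ih =>
    obtain ⟨N, h1, h2⟩ := ih
    refine ⟨N ⊔ Sy coordG ^ K, h1.sup ((Sy_fg _).pow K), h2.trans ?_⟩
    rw [sup_assoc]
    exact sup_le_sup le_rfl (mC_le mId_eq K)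

instance finite_quot (K : ℕ) : Module.Finite ℂ (On n ⧸ mC n K) := by
  obtain ⟨N, h1, h2⟩ := exists_fg (n := n) K
  refine ⟨?_⟩
  have : (⊤ : Submodule ℂ (On n ⧸ mC n K)) = N.map (mC n K).mkQ := by
    apply le_antisymm _ le_top
    intro x _
    obtain ⟨g, rfl⟩ := Submodule.mkQ_surjective _ x
    obtain ⟨a, ha, b, hb, rfl⟩ := Submodule.mem_sup.1 (h2 (Submodule.mem_top (x := g)))
    refine ⟨a, ha, ?_⟩
    rw [map_add, (Submodule.mkQ_apply _ b).trans ((Submodule.Quotient.mk_eq_zero _).2 hb), add_zero]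
  rw [this]
  exact h1.map _

lemma rep_pullback (φ : CoordChange n) (g : On n) :
    On.rep (pullback φ g) =ᶠ[𝓝 0] fun x => On.rep g (φ.toFun x) := by
  apply Filter.Germ.coe_eq.1
  rw [On.rep_spec]
  have : (pullback φ g : Filter.Germ (𝓝 (0 : Fin n → ℂ)) ℂ) =
    (g : Filter.Germ (𝓝 (0 : Fin n → ℂ)) ℂ).compTendsto φ.toFun φ.tendsto := rfl
  rw [this, ← On.rep_spec g]
  rfl

/-- inverse change of coordinates -/
def CoordChange.swap (φ : CoordChange n) : CoordChange n where
  toFun := φ.invFun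
  invFun := φ.toFun
  analyticAt := φ.inv_analyticAt
  inv_analyticAt := φ.analyticAt
  map_zero := φ.inv_map_zero
  inv_map_zero := φ.map_zero
  left_inv := φ.right_inv
  right_inv := φ.left_inv

lemma pullback_swap (φ : CoordChange n) (g : On n) : pullback φ.swap (pullback φ g) = g := by
  apply On_ext
  refine (rep_pullback _ _).trans ?_
  have h1 := φ.swap.tendsto.eventually (rep_pullback φ g)
  filter_upwards [h1, φ.right_inv] with x hx h2
  refine hx.trans ?_
  change On.rep g (φ.toFun (φ.invFun x)) = _
  rw [h2]

/-- pullback as an algebra automorphism -/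
def pullE (φ : CoordChange n) : On n ≃ₐ[ℂ] On n where
  toFun := pullback φ
  invFun := pullback φ.swap
  left_inv := pullback_swap φ
  right_inv := pullback_swap φ.swap
  map_mul' a b := by
    apply On_ext
    refine (rep_pullback φ _).trans (EventuallyEq.trans ?_ (rep_mul _ _).symm)
    filter_upwards [φ.tendsto.eventually (rep_mul a b), rep_pullback φ a, rep_pullback φ b]
      with x h1 h2 h3
    simp [h1, h2, h3]
  map_add' a b := by
    apply On_ext
    refine (rep_pullback φ _).trans (EventuallyEq.trans ?_ (rep_add _ _).symm)
    filter_upwards [φ.tendsto.eventually (rep_add a b), rep_pullback φ a, rep_pullback φ b]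
      with x h1 h2 h3
    simp [h1, h2, h3]
  commutes' c := by
    apply On_ext
    refine (rep_pullback φ _).trans (EventuallyEq.trans ?_ (rep_algebraMap _).symm)
    filter_upwards [φ.tendsto.eventually (rep_algebraMap (n := n) c)] with x h1
    exact h1

lemma pullE_apply (φ : CoordChange n) (g : On n) : pullE φ g = pullback φ g := rfl

lemma ev0_pullE (φ : CoordChange n) (g : On n) : ev0A n (pullE φ g) = ev0A n g := by
  have := (rep_pullback φ g).self_of_nhds
  beta_reduce at this
  rw [φ.map_zero] at this
  exact this

lemma pullE_mem {φ : CoordChange n} {g : On n} : pullE φ g ∈ mId n ↔ g ∈ mId n := by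
  rw [mem_mId, mem_mId, ev0_pullE]

lemma pullE_symm_mem {φ : CoordChange n} {g : On n} : (pullE φ).symm g ∈ mId n ↔ g ∈ mId n := by
  rw [← pullE_mem (φ := φ), AlgEquiv.apply_symm_apply]

lemma exists_coordChange (y : Fin n → On n) (h0 : ∀ j, y j ∈ mId n)
    (hB : IsUnit (Matrix.of fun j i => ev0A n (pd i (y j)))) :
    ∃ φ : CoordChange n, ∀ j, pullE φ (y j) = coordG j := by
  classical
  set C : Matrix (Fin n) (Fin n) ℂ := Matrix.of fun j i => ev0A n (pd i (y j)) with hC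
  let Φ : (Fin n → ℂ) → (Fin n → ℂ) := fun x j => On.rep (y j) x
  have hΦ : AnalyticAt ℂ Φ 0 := AnalyticAt.pi fun j => On.rep_analyticAt (y j)
  have hΦ0 : Φ 0 = 0 := by
    funext j
    exact mem_mId.1 (h0 j)
  have hL : ∀ v, fderiv ℂ Φ 0 v = C.mulVec v := by
    intro v
    funext j
    have h1 : fderiv ℂ Φ 0 v j = fderiv ℂ (On.rep (y j)) 0 v := by
      have := fderiv_pi (𝕜 := ℂ) (φ := fun j => On.rep (y j)) (x := (0 : Fin n → ℂ))
        (fun j => (On.rep_analyticAt (y j)).differentiableAt)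
      change (fderiv ℂ (fun x j => On.rep (y j) x) 0) v j = _
      rw [this]
      rfl
    rw [h1]
    have h3 : v = ∑ i, v i • (Pi.single i (1:ℂ) : Fin n → ℂ) := by
      funext j; simp [Finset.sum_apply, Pi.single_apply]
    conv_lhs => rw [h3]
    rw [map_sum, Matrix.mulVec, dotProduct]
    refine Finset.sum_congr rfl fun i _ => ?_
    rw [map_smul, smul_eq_mul, mul_comm]
    congr 1
    exact ((rep_pd i (y j)).self_of_nhds).symm
  have hinj : Function.Injective (Matrix.toLin' C) := Matrix.mulVec_injective_of_isUnit hB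
  let L : (Fin n → ℂ) ≃L[ℂ] (Fin n → ℂ) :=
    (LinearEquiv.ofInjectiveEndo (Matrix.toLin' C) hinj).toContinuousLinearEquiv
  have hLeq : fderiv ℂ Φ 0 = (L : (Fin n → ℂ) →L[ℂ] (Fin n → ℂ)) := by
    ext1 v
    rw [hL]
    rfl
  have hs : HasStrictFDerivAt Φ (L : (Fin n → ℂ) →L[ℂ] (Fin n → ℂ)) 0 := by
    rw [← hLeq]; exact hΦ.hasStrictFDerivAt
  let e := hs.toOpenPartialHomeomorph Φ
  have he : (e : (Fin n → ℂ) → (Fin n → ℂ)) = Φ := rfl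
  have hmem : (0 : Fin n → ℂ) ∈ e.source := hs.mem_toOpenPartialHomeomorph_source
  have hmem' : (0 : Fin n → ℂ) ∈ e.target := by
    have := hs.image_mem_toOpenPartialHomeomorph_target
    rwa [hΦ0] at this
  have hsymm0 : e.symm 0 = 0 := by
    have := e.left_inv hmem
    rwa [he, hΦ0] at this
  have han : AnalyticAt ℂ e.symm 0 := by
    have := e.analyticAt_symm' (i := L) hmem hΦ hLeq
    rwa [he, hΦ0] at this
  have hr : ∀ᶠ x in 𝓝 (0 : Fin n → ℂ), Φ (e.symm x) = x := e.eventually_right_inverse hmem'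
  have hl : ∀ᶠ x in 𝓝 (0 : Fin n → ℂ), e.symm (Φ x) = x := e.eventually_left_inverse hmem
  let φ : CoordChange n := ⟨e.symm, Φ, han, hΦ, hsymm0, hΦ0, hr, hl⟩
  refine ⟨φ, fun j => ?_⟩
  apply On_ext
  have h5 : On.rep (coordG j) =ᶠ[𝓝 (0 : Fin n → ℂ)] fun x => x j := rep_mkOn _ _
  refine (rep_pullback φ _).trans (EventuallyEq.trans ?_ h5.symm)
  filter_upwards [hr] with x hx
  exact congrFun hx j

/-- conjugate derivation -/
def conjD (e : On n ≃ₐ[ℂ] On n) (E : Derivation ℂ (On n) (On n)) : Derivation ℂ (On n) (On n) :=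
  Derivation.mk' (e.symm.toLinearMap ∘ₗ (E : On n →ₗ[ℂ] On n) ∘ₗ e.toLinearMap) (fun a b => by
    simp [Derivation.leibniz])

lemma conjD_apply (e : On n ≃ₐ[ℂ] On n) (E : Derivation ℂ (On n) (On n)) (g : On n) :
    conjD e E g = e.symm (E (e g)) := rfl

/-- Euler vector field -/
def eulerD (w : Fin n → ℚ) : Derivation ℂ (On n) (On n) := vfD fun i => (w i : ℂ) • coordG i

lemma isQH_iff (w : Fin n → ℚ) (d : ℚ) (φ : CoordChange n) (g : On n) :
    IsQH n w d (pullback φ g) ↔ conjD (pullE φ) (eulerD w) g = (d : ℂ) • g := by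
  rw [conjD_apply, AlgEquiv.symm_apply_eq, map_smul, eulerD, vfD_apply, applyVF, IsQH, pullE_apply]
  simp

lemma conjD_y (w : Fin n → ℚ) (φ : CoordChange n) (j : Fin n) :
    conjD (pullE φ) (eulerD w) ((pullE φ).symm (coordG j)) =
      (w j : ℂ) • ((pullE φ).symm (coordG j)) := by
  rw [conjD_apply, AlgEquiv.apply_symm_apply, eulerD, vfD_coordG, map_smul]

lemma span_y (φ : CoordChange n) :
    mId n = Ideal.span (Set.range fun j => (pullE φ).symm (coordG j)) := by
  apply le_antisymm
  · intro g hg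
    rw [← pullE_mem (φ := φ), mId_eq, Ideal.mem_span_range_iff_exists_fun] at hg
    obtain ⟨a, ha⟩ := hg
    have : g = ∑ i, (pullE φ).symm (a i) * (pullE φ).symm (coordG i) := by
      rw [← (pullE φ).symm_apply_apply g, ← ha, map_sum]
      simp
    rw [this]
    exact Ideal.sum_mem _ fun i _ => Ideal.mul_mem_left _ _ (Ideal.subset_span ⟨i, rfl⟩)
  · rw [Ideal.span_le]
    rintro _ ⟨i, rfl⟩
    exact pullE_symm_mem.2 (coordG_mem i)

lemma der_span_mem {D : Derivation ℂ (On n) (On n)} {ι : Type*} [Fintype ι] {h : ι → On n}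
    (H : ∀ j, D (h j) ∈ Ideal.span (Set.range h)) {g : On n} (hg : g ∈ Ideal.span (Set.range h)) :
    D g ∈ Ideal.span (Set.range h) := by
  rw [Ideal.mem_span_range_iff_exists_fun] at hg
  obtain ⟨a, rfl⟩ := hg
  rw [map_sum]
  refine Ideal.sum_mem _ fun i _ => ?_
  rw [D.leibniz, smul_eq_mul, smul_eq_mul]
  exact add_mem (Ideal.mul_mem_left _ _ (H i))
    (Ideal.mul_mem_right _ _ (Ideal.subset_span ⟨i, rfl⟩))

lemma smul_mem_ideal (I : Ideal (On n)) (c : ℂ) {g : On n} (hg : g ∈ I) : c • g ∈ I := by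
  rw [Algebra.smul_def]; exact Ideal.mul_mem_left _ _ hg

lemma der_pow_mem {D : Derivation ℂ (On n) (On n)} (H : ∀ g ∈ mId n, D g ∈ mId n) (K : ℕ) :
    ∀ g ∈ mId n ^ K, D g ∈ mId n ^ K := by
  induction K with
  | zero => intro g _; simp
  | succ K ih =>
    intro g hg
    rw [pow_succ] at hg ⊢
    refine Submodule.mul_induction_on hg ?_ ?_
    · intro a ha b hb
      rw [D.leibniz, smul_eq_mul, smul_eq_mul, mul_comm b]
      exact add_mem (Ideal.mul_mem_mul ha (H b hb)) (Ideal.mul_mem_mul (ih a ha) hb)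
    · intro a b ha hb
      rw [map_add]; exact add_mem ha hb

lemma pd_mul_ev (i : Fin n) (a b : On n) : ev0A n (pd i (a * b)) =
    ev0A n a * ev0A n (pd i b) + ev0A n b * ev0A n (pd i a) := by
  have : pd i (a * b) = a * pd i b + b * pd i a := (pdD i).leibniz a b
  rw [this, map_add, map_mul, map_mul]

lemma pd_sum {ι : Type*} (s : Finset ι) (i : Fin n) (a : ι → On n) :
    pd i (∑ k ∈ s, a k) = ∑ k ∈ s, pd i (a k) := map_sum (pdD i) a s

lemma pd_smul (i : Fin n) (c : ℂ) (a : On n) : pd i (c • a) = c • pd i a := (pdD i).map_smul c a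

/-- Jacobian matrix at origin -/
def jac (y : Fin n → On n) : Matrix (Fin n) (Fin n) ℂ := Matrix.of fun i j => ev0A n (pd i (y j))

lemma jac_isUnit {y : Fin n → On n} (hy : mId n = Ideal.span (Set.range y)) : IsUnit (jac y) := by
  have hm : ∀ j, ev0A n (y j) = 0 := fun j => mem_mId.1 (by
    rw [hy]; exact Ideal.subset_span ⟨j, rfl⟩)
  have h1 : ∀ k, ∃ o : Fin n → On n, ∑ j, o j * y j = coordG k := by
    intro k
    have := coordG_mem k
    rwa [hy, Ideal.mem_span_range_iff_exists_fun] at this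
  choose o ho using h1
  refine IsUnit.of_mul_eq_one (Matrix.of fun j k => ev0A n (o k j)) ?_
  ext i k
  rw [Matrix.mul_apply]
  have h2 : ev0A n (pd i (coordG k)) = (1 : Matrix (Fin n) (Fin n) ℂ) i k := by
    rw [pd_coordG, Matrix.one_apply]
    split_ifs <;> simp
  rw [← h2, ← ho k, pd_sum, map_sum]
  refine Finset.sum_congr rfl fun j _ => ?_
  rw [pd_mul_ev, hm]
  simp [jac, mul_comm]

lemma linPart_mul_jac {δ : Fin n → On n} (hδ : ∀ i, δ i ∈ mId n) (y : Fin n → On n) :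
    linPart δ * jac y = jac fun j => vfD δ (y j) := by
  ext i j
  rw [Matrix.mul_apply]
  simp only [linPart, jac, Matrix.of_apply]
  rw [vfD_apply, applyVF, pd_sum, map_sum]
  refine Finset.sum_congr rfl fun k _ => ?_
  rw [pd_mul_ev, mem_mId.1 (hδ k), zero_mul, zero_add, mul_comm]
  rfl

theorem forward_dir (X : Set (Fin n → ℂ)) (f : On n) (w : Fin n → ℚ) (hw : ∀ i, 0 < w i)
    (h : RelQH n X f w) :
    ∃ δ : Fin n → On n, δ ∈ ThetaX n X ∧ (∀ i, δ i ∈ mId n) ∧ applyVF δ f = f ∧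
        ∃ w : Fin n → ℚ, (∀ i, 0 < w i) ∧ EigsEq δ w := by
  obtain ⟨φ, hf, m, h, d, hspan, hd, hh⟩ := h
  set D := conjD (pullE φ) (eulerD w) with hD
  set y : Fin n → On n := fun j => (pullE φ).symm (coordG j) with hy
  have hsy : mId n = Ideal.span (Set.range y) := span_y φ
  have hDy : ∀ j, D (y j) = (w j : ℂ) • y j := conjD_y w φ
  have hDm : ∀ g ∈ mId n, D g ∈ mId n := by
    intro g hg
    rw [hsy] at hg ⊢
    refine der_span_mem (fun j => ?_) hg
    rw [hDy]
    exact smul_mem_ideal _ _ (Ideal.subset_span ⟨j, rfl⟩)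
  let δ : Fin n → On n := fun i => D (coordG i)
  have hδD : ∀ g, vfD δ g = D g := der_ext coordG mId_eq fun i => vfD_coordG δ i
  have hδm : ∀ i, δ i ∈ mId n := fun i => hDm _ (coordG_mem i)
  refine ⟨δ, ?_, hδm, ?_, w, hw, ?_⟩
  · intro g hg
    rw [← vfD_apply, hδD]
    rw [← hspan] at hg ⊢
    refine der_span_mem (fun j => ?_) hg
    rw [(isQH_iff _ _ _ _).1 (hh j)]
    exact smul_mem_ideal _ _ (Ideal.subset_span ⟨j, rfl⟩)
  · rw [← vfD_apply, hδD, (isQH_iff _ _ _ _).1 hf]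
    simp
  · have h1 := linPart_mul_jac hδm y
    have h2 : (jac fun j => vfD δ (y j)) = jac y * Matrix.diagonal fun j => (w j : ℂ) := by
      ext i j
      rw [Matrix.mul_diagonal]
      simp only [jac, Matrix.of_apply, hδD, hDy, pd_smul, map_smul, smul_eq_mul, mul_comm]
    rw [h2] at h1
    obtain ⟨B, hB⟩ := jac_isUnit hsy
    rw [← hB] at h1
    have h3 : linPart δ = B.val * (Matrix.diagonal fun j => (w j : ℂ)) * B.val⁻¹ := by
      rw [← h1, mul_assoc, ← Matrix.coe_units_inv, Units.mul_inv, mul_one]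
    rw [EigsEq, h3, Matrix.charpoly_units_conj, Matrix.charpoly_diagonal]

lemma nrm_smul (ρ : Fin n → ℝ≥0) (a : ℂ) (c : PS n) : nrm ρ (a • c) = (‖a‖₊ : ℝ≥0) * nrm ρ c := by
  rw [nrm, nrm, ← ENNReal.tsum_mul_left]
  refine tsum_congr fun α => ?_
  rw [← ENNReal.coe_mul, MvPowerSeries.coeff_smul, nnnorm_mul, mul_assoc]

/-- diagonal operators on power series -/
def diagOp (E : Idx n → ℂ) : PS n →ₗ[ℂ] PS n where
  toFun u := fun α => E α * MvPowerSeries.coeff α u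
  map_add' u v := by
    funext α
    change E α * MvPowerSeries.coeff α (u + v) =
      E α * MvPowerSeries.coeff α u + E α * MvPowerSeries.coeff α v
    rw [map_add, mul_add]
  map_smul' r u := by
    funext α
    change E α * MvPowerSeries.coeff α (r • u) = r * (E α * MvPowerSeries.coeff α u)
    rw [MvPowerSeries.coeff_smul]; ring

lemma coeff_diagOp (E : Idx n → ℂ) (u : PS n) (α : Idx n) :
    MvPowerSeries.coeff α (diagOp E u) = E α * MvPowerSeries.coeff α u := rfl

/-- partial derivative of formal power series -/
def dP (j : Fin n) : Derivation ℂ (PS n) (PS n) := MvPowerSeries.pderiv ℂ j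

lemma coeff_dP (j : Fin n) (c : PS n) (η : Idx n) :
    MvPowerSeries.coeff η (dP j c) = MvPowerSeries.coeff (η + Finsupp.single j 1) c * (η j + 1) :=
  MvPowerSeries.coeff_pderiv ..

lemma dP_eq (j : Fin n) (c : PS n) : dP j c = Qop (fun _ => True) (Finsupp.single j 1)
    (diagOp (fun α => (α j : ℂ)) c) := by
  ext η
  rw [coeff_dP, coeff_Qop, if_pos trivial, coeff_diagOp]
  simp [mul_comm]

lemma conv_dP (j : Fin n) {c : PS n} (hc : IsConv c) : IsConv (dP j c) := by
  obtain ⟨ρ, hρ, h⟩ := hc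
  have hρ' : ∀ i, 0 < (fun i => ρ i * 2⁻¹) i := fun i => by have := hρ i; positivity
  refine ⟨fun i => ρ i * 2⁻¹, hρ', ?_⟩
  rw [dP_eq]
  refine nrm_Qop_lt hρ' _ _ (lt_of_le_of_lt ?_ h)
  refine ENNReal.tsum_le_tsum fun α => ?_
  rw [coeff_diagOp, ENNReal.coe_le_coe, nnnorm_mul]
  have h1 : wt (fun i => ρ i * 2⁻¹) α = wt ρ α * ∏ i, (2⁻¹ : ℝ≥0) ^ α i := by
    simp [wt, mul_pow, Finset.prod_mul_distrib]
  have h2 : ∏ i, (2⁻¹ : ℝ≥0) ^ α i ≤ 2⁻¹ ^ α j := by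
    have := Finset.prod_le_prod_of_subset_of_le_one' (f := fun i => (2⁻¹ : ℝ≥0) ^ α i)
      (Finset.subset_univ {j}) (fun i _ _ => pow_le_one₀ (by positivity) (by norm_num))
    simpa using this
  have h3 : (‖(α j : ℂ)‖₊ : ℝ≥0) * 2⁻¹ ^ α j ≤ 1 := by
    rw [show ‖(α j : ℂ)‖₊ = (α j : ℝ≥0) by simp, inv_pow, ← div_eq_mul_inv, div_le_one (by positivity)]
    exact_mod_cast (Nat.lt_two_pow_self).le
  calc ‖(α j : ℂ)‖₊ * ‖MvPowerSeries.coeff α c‖₊ * wt (fun i => ρ i * 2⁻¹) α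
      = ‖MvPowerSeries.coeff α c‖₊ * wt ρ α * (‖(α j : ℂ)‖₊ * ∏ i, (2⁻¹ : ℝ≥0) ^ α i) := by
        rw [h1]; ring
    _ ≤ ‖MvPowerSeries.coeff α c‖₊ * wt ρ α * (‖(α j : ℂ)‖₊ * 2⁻¹ ^ α j) := by gcongr
    _ ≤ ‖MvPowerSeries.coeff α c‖₊ * wt ρ α * 1 := by gcongr
    _ = _ := mul_one _

lemma ordGE_dP (j : Fin n) {c : PS n} {M : ℕ} (h : ordGE M c) : ordGE (M - 1) (dP j c) := by
  intro α hα
  rw [coeff_dP, h, zero_mul]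
  have : ∑ x : Fin n, (Finsupp.single j 1 : Idx n) x = 1 := by
    simp [Finsupp.single_apply]
  simp only [Finsupp.add_apply, Finset.sum_add_distrib]
  omega

lemma coeff_X_mul_dP (j : Fin n) (c : PS n) (α : Idx n) :
    MvPowerSeries.coeff α ((MvPowerSeries.X j : PS n) * dP j c) = α j * MvPowerSeries.coeff α c := by
  rw [MvPowerSeries.X, MvPowerSeries.coeff_monomial_mul, one_mul]
  by_cases h : Finsupp.single j 1 ≤ α
  · rw [if_pos h, coeff_dP, tsub_add_cancel_of_le h]
    have h1 : 1 ≤ α j := by simpa using h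
    have : (((α - Finsupp.single j 1 : Idx n) j : ℕ) : ℂ) + 1 = α j := by
      rw [Finsupp.tsub_apply, Finsupp.single_eq_same, Nat.cast_sub h1]; simp
    rw [this, mul_comm]
  · rw [if_neg h]
    have h1 : α j = 0 := by
      by_contra hcon
      apply h
      simp; omega
    simp [h1]

lemma poincare_PS (μ : Fin n → ℚ) (wm : ℚ) (hwm : 0 < wm) (hμ : ∀ i, wm ≤ μ i) (M : ℕ) (hM0 : 0 < M)
    (lam : ℚ) (hM : 2 * lam ≤ M * wm) (q : Fin n → ℕ) (hq : ∀ i, 2 ≤ q i) (B : Fin n → PS n)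
    (hB : ∀ j, IsConv (B j)) (hBs : ∀ j α, MvPowerSeries.coeff α (B j) ≠ 0 → q j < Nq q α)
    (hB1 : ∀ j, ordGE 1 (B j)) (h : PS n) (hh : IsConv h) (hhM : ordGE M h) :
    ∃ g : PS n, IsConv g ∧ ordGE M g ∧
      ∑ j, ((μ j : ℂ) • (MvPowerSeries.X j : PS n) + B j) * dP j g - (lam : ℂ) • g = h := by
  classical
  let E : Idx n → ℚ := fun α => ∑ i, μ i * α i - lam
  have hE : ∀ α : Idx n, M ≤ ∑ i, α i → (∑ i, α i : ℕ) * wm ≤ 2 * E α := by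
    intro α hα
    have h1 : (∑ i, α i : ℕ) * wm ≤ ∑ i, μ i * α i := by
      push_cast
      rw [Finset.sum_mul]
      refine Finset.sum_le_sum fun i _ => ?_
      rw [mul_comm]
      exact mul_le_mul_of_nonneg_right (hμ i) (by positivity)
    have h2 : (M : ℚ) * wm ≤ (∑ i, α i : ℕ) * wm :=
      mul_le_mul_of_nonneg_right (by exact_mod_cast hα) hwm.le
    have : E α = ∑ i, μ i * α i - lam := rfl
    linarith
  have hEpos : ∀ α : Idx n, M ≤ ∑ i, α i → 0 < E α := by
    intro α hα
    have h1 := hE α hα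
    have h2 : (0 : ℚ) < (∑ i, α i : ℕ) * wm := mul_pos (by exact_mod_cast (by omega)) hwm
    linarith
  let G : Idx n → ℂ := fun α => if M ≤ ∑ i, α i then ((E α : ℂ))⁻¹ else 0
  let κ : ℝ≥0 := ‖((2 / wm : ℚ) : ℂ)‖₊
  have hκ : 0 < κ := by
    have : ((2 / wm : ℚ) : ℂ) ≠ 0 := by
      have : (2 / wm : ℚ) ≠ 0 := by positivity
      exact_mod_cast this
    simpa [κ] using this
  have hG : ∀ α, ‖G α‖₊ * (∑ i, α i : ℕ) ≤ κ := by
    intro α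
    by_cases hα : M ≤ ∑ i, α i
    · have h1 := hE α hα
      have h2 := hEpos α hα
      have h3 : (E α)⁻¹ * (∑ i, α i : ℕ) ≤ 2 / wm := by
        rw [le_div_iff₀ hwm, inv_mul_eq_div, div_mul_eq_mul_div, div_le_iff₀ h2]
        exact h1
      have h4 : G α = (((E α)⁻¹ : ℚ) : ℂ) := by simp only [G, if_pos hα]; push_cast; rfl
      rw [h4]
      rw [← NNReal.coe_le_coe]
      have hn : ∀ r : ℚ, 0 ≤ r → ‖(r : ℂ)‖ = (r : ℝ) := fun r hr => by
        rw [Complex.norm_ratCast, abs_of_nonneg (by exact_mod_cast hr)]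
      rw [NNReal.coe_mul, NNReal.coe_natCast, coe_nnnorm, hn _ (inv_pos.2 h2).le]
      have h6 : ((κ : ℝ≥0) : ℝ) = ((2 / wm : ℚ) : ℝ) := by
        simp only [κ, coe_nnnorm]
        exact hn _ (by positivity)
      rw [h6]
      exact_mod_cast h3
    · simp [G, if_neg hα]
  have hGj : ∀ α j, ‖G α‖₊ * (α j : ℝ≥0) ≤ κ := by
    intro α j
    refine le_trans ?_ (hG α)
    gcongr
    exact Finset.single_le_sum (f := fun i => α i) (fun _ _ => Nat.zero_le _) (Finset.mem_univ j)
  have hG1 : ∀ α, ‖G α‖₊ ≤ κ := by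
    intro α
    by_cases hα : M ≤ ∑ i, α i
    · refine le_trans ?_ (hG α)
      refine le_mul_of_one_le_right (zero_le) ?_
      exact_mod_cast (by omega)
    · simp [G, if_neg hα]
  have hGconv : ∀ u : PS n, IsConv u → IsConv (diagOp G u) := by
    rintro u ⟨ρ, hρ, hu⟩
    refine ⟨ρ, hρ, ?_⟩
    have h1 : nrm ρ (diagOp G u) ≤ nrm ρ (((2 / wm : ℚ) : ℂ) • u) := by
      refine nrm_le_of_coeff fun α => ?_
      rw [coeff_diagOp, MvPowerSeries.coeff_smul, nnnorm_mul, nnnorm_mul]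
      gcongr
      exact hG1 α
    refine h1.trans_lt ?_
    rw [nrm_smul]
    exact ENNReal.mul_lt_top ENNReal.coe_lt_top hu
  have hGord : ∀ u : PS n, ordGE M (diagOp G u) := by
    intro u α hα
    rw [coeff_diagOp]
    simp only [G, if_neg (not_le.2 hα), zero_mul]
  have hv : ∀ (ρ : Fin n → ℝ≥0) (u : PS n) (j : Fin n),
      nrm ρ (dP j (diagOp G u)) * (ρ j : ℝ≥0) ≤ (κ : ℝ≥0∞) * nrm ρ u := by
    intro ρ u j
    have h1 : nrm ρ (dP j (diagOp G u)) ≤ nrm ρ (((2 / wm : ℚ) : ℂ) •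
        Qop (fun _ => True) (Finsupp.single j 1) u) := by
      refine nrm_le_of_coeff fun η => ?_
      rw [dP_eq, MvPowerSeries.coeff_smul, coeff_Qop, coeff_Qop, if_pos trivial, if_pos trivial,
        coeff_diagOp, coeff_diagOp, ← mul_assoc, nnnorm_mul, nnnorm_mul, nnnorm_mul]
      gcongr
      have := hGj (η + Finsupp.single j 1) j
      rw [mul_comm]
      have h5 : ∀ k : ℕ, ‖(k : ℂ)‖₊ = (k : ℝ≥0) := fun k => by simp
      rw [h5]
      exact this
    rw [nrm_smul] at h1
    refine (mul_le_mul_left h1 _).trans ?_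
    rw [mul_assoc]
    refine mul_le_mul_right ?_ _
    have h2 := nrm_Qop ρ (fun _ => True) (Finsupp.single j 1) u
    rw [wt_single] at h2
    simpa [nrm] using h2
  let T : PS n →ₗ[ℂ] PS n := ∑ j, (LinearMap.mulLeft ℂ (B j)) ∘ₗ (dP j : PS n →ₗ[ℂ] PS n) ∘ₗ diagOp G
  have hT : ∀ u, T u = ∑ j, B j * dP j (diagOp G u) := by
    intro u
    simp only [T, LinearMap.sum_apply]
    rfl
  -- the radius
  let ε : ℝ≥0 := (2 * (n + 1) * κ)⁻¹
  have hε : 0 < ε := by positivity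
  have hts : ∀ j, ∃ s0, ∀ s ≥ s0, nrm (qr q s) (B j) ≤ ((ε * ((q j : ℝ≥0)⁻¹) ^ s : ℝ≥0) : ℝ≥0∞) :=
    fun j => tail_small hq (hB j) (q j) (by have := hq j; omega) (hBs j) ε hε
  choose s0 hs0 using hts
  obtain ⟨s1, hs1⟩ := exists_qr hq hh
  let s := max s1 (Finset.univ.sup s0)
  have hhs : nrm (qr q s) h < ⊤ := by
    refine lt_of_le_of_lt (nrm_mono (fun i => ?_) h) hs1
    refine pow_le_pow_of_le_one (by positivity) ?_ (le_max_left _ _)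
    refine inv_le_one_of_one_le₀ ?_
    exact_mod_cast (by have := hq i; omega)
  have hBn : ∀ j, nrm (qr q s) (B j) ≤ ((ε * qr q s j : ℝ≥0) : ℝ≥0∞) := fun j =>
    hs0 j s ((Finset.le_sup (Finset.mem_univ j)).trans (le_max_right _ _))
  have hcaus : ∀ (u : PS n) (β : Idx n), (∀ α, Nq q α < Nq q β → MvPowerSeries.coeff α u = 0) →
      MvPowerSeries.coeff β (T u) = 0 := by
    intro u β hβ
    rw [hT, map_sum]
    refine Finset.sum_eq_zero fun j _ => ?_
    rw [MvPowerSeries.coeff_mul]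
    refine Finset.sum_eq_zero fun p hp => ?_
    rw [Finset.HasAntidiagonal.mem_antidiagonal] at hp
    by_cases h0 : MvPowerSeries.coeff p.1 (B j) = 0
    · rw [h0, zero_mul]
    · have h1 := hBs j p.1 h0
      rw [coeff_dP, coeff_diagOp, hβ (p.2 + Finsupp.single j 1)]
      · simp
      · rw [← hp, Nq_add, Nq_add, Nq_single, mul_comm]
        exact Nat.mul_lt_mul_of_pos_right h1 (Nq_pos hq _)
  have hcontr : ∀ u, 2 * nrm (qr q s) (T u) ≤ nrm (qr q s) u := by
    intro u
    rw [hT]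
    have h1 : nrm (qr q s) (∑ j, B j * dP j (diagOp G u)) ≤
        ∑ j : Fin n, (ε : ℝ≥0∞) * (κ * nrm (qr q s) u) := by
      refine (nrm_sum_le _ _ _).trans (Finset.sum_le_sum fun j _ => ?_)
      refine (nrm_mul_le _ _ _).trans ((mul_le_mul_left (hBn j) _).trans ?_)
      rw [ENNReal.coe_mul, mul_assoc]
      refine mul_le_mul_right ?_ _
      rw [mul_comm]
      exact hv _ _ _
    refine (mul_le_mul_right h1 _).trans ?_
    rw [Finset.sum_const, Finset.card_univ, Fintype.card_fin, nsmul_eq_mul]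
    have h2 : (2 : ℝ≥0) * (n * (ε * κ)) ≤ 1 := by
      have : ε * κ = (2 * ((n : ℝ≥0) + 1))⁻¹ := by
        simp only [ε]; field_simp
      rw [this, ← mul_assoc, ← div_eq_mul_inv, div_le_one (by positivity)]
      gcongr
      simp
    calc (2 : ℝ≥0∞) * (n * (ε * (κ * nrm (qr q s) u)))
        = (((2 : ℝ≥0) * (n * (ε * κ)) : ℝ≥0) : ℝ≥0∞) * nrm (qr q s) u := by
          push_cast; ring
      _ ≤ 1 * nrm (qr q s) u := mul_le_mul_left (by exact_mod_cast h2) _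
      _ = _ := one_mul _
  obtain ⟨u, hu, hun⟩ := neumann (qr q s) (qr_pos hq s) (Nq q) T hcaus hcontr h hhs
  have hTord : ordGE M (T u) := by
    rw [hT]
    refine ordGE_sum _ fun j _ => ?_
    have := ordGE_mul (hB1 j) (ordGE_dP j (hGord u))
    rwa [Nat.add_sub_cancel' hM0] at this
  have huord : ordGE M u := by
    intro α hα
    have h1 := congrArg (MvPowerSeries.coeff α) hu
    rw [map_add, hTord α hα, hhM α hα, add_zero] at h1
    exact h1
  refine ⟨diagOp G u, hGconv u ⟨_, qr_pos hq s, hun⟩, hGord u, ?_⟩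
  rw [← hu, hT]
  simp only [add_mul, Finset.sum_add_distrib]
  rw [add_sub_right_comm]
  congr 1
  ext α
  rw [map_sub, map_sum, MvPowerSeries.coeff_smul]
  have h1 : ∀ j, MvPowerSeries.coeff α (((μ j : ℂ) • (MvPowerSeries.X j : PS n)) * dP j (diagOp G u))
      = (μ j : ℂ) * (α j * (G α * MvPowerSeries.coeff α u)) := by
    intro j
    rw [smul_mul_assoc, MvPowerSeries.coeff_smul, coeff_X_mul_dP, coeff_diagOp]
  rw [Finset.sum_congr rfl fun j _ => h1 j, coeff_diagOp]
  have h2 : ∑ j, (μ j : ℂ) * (α j * (G α * MvPowerSeries.coeff α u)) -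
      lam * (G α * MvPowerSeries.coeff α u) = (E α : ℂ) * G α * MvPowerSeries.coeff α u := by
    simp only [E]
    push_cast
    rw [sub_mul, sub_mul, Finset.sum_mul, Finset.sum_mul]
    congr 1
    · exact Finset.sum_congr rfl fun j _ => by ring
    · ring
  rw [h2]
  by_cases hα : M ≤ ∑ i, α i
  · have h3 : (E α : ℂ) ≠ 0 := by exact_mod_cast (hEpos α hα).ne'
    simp only [G, if_pos hα]
    rw [mul_inv_cancel₀ h3, one_mul]
  · rw [huord α (not_le.1 hα), mul_zero]

lemma tri (k : ℕ) : ∀ (V : Type) [AddCommGroup V] [Module ℂ V] [FiniteDimensional ℂ V]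
    (_ : Module.finrank ℂ V = k) (T : V →ₗ[ℂ] V),
    ∃ (b : Module.Basis (Fin k) ℂ V) (U : Matrix (Fin k) (Fin k) ℂ),
      (∀ j, T (b j) = ∑ i, U i j • b i) ∧ ∀ i j, i < j → U i j = 0 := by
  induction k with
  | zero =>
    intro V _ _ _ hk T
    exact ⟨Module.finBasisOfFinrankEq ℂ V hk, 0, fun j => j.elim0, fun j => j.elim0⟩
  | succ k ih =>
    intro V _ _ _ hk T
    have hnt : Nontrivial V := Module.nontrivial_of_finrank_pos (R := ℂ) (by omega)
    obtain ⟨μ, hμ⟩ := Module.End.exists_eigenvalue (K := ℂ) T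
    let S : V →ₗ[ℂ] V := T - algebraMap ℂ (Module.End ℂ V) μ
    have hS : ∀ x, S x = T x - μ • x := fun x => rfl
    have hr : LinearMap.range S < ⊤ := by
      rw [lt_top_iff_ne_top]
      intro htop
      have hinj := (LinearMap.injective_iff_surjective (f := S)).2 (LinearMap.range_eq_top.1 htop)
      obtain ⟨v, hv⟩ := hμ.exists_hasEigenvector
      apply hv.2
      apply hinj
      rw [map_zero, hS, hv.apply_eq_smul, sub_self]
    obtain ⟨f, hf0, hf⟩ := Submodule.exists_le_ker_of_lt_top _ hr
    have hfS : ∀ x, f (T x) = μ * f x := by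
      intro x
      have : f (S x) = 0 := hf ⟨x, rfl⟩
      rw [hS, map_sub, map_smul, sub_eq_zero] at this
      exact this
    have hfk : Module.finrank ℂ (LinearMap.ker f) = k := by
      have := Module.Dual.finrank_ker_add_one_of_ne_zero hf0
      omega
    obtain ⟨y, hy⟩ : ∃ y, f y ≠ 0 := by
      by_contra! h
      exact hf0 (LinearMap.ext h)
    let T' : LinearMap.ker f →ₗ[ℂ] LinearMap.ker f := T.restrict (fun x hx => by
      rw [LinearMap.mem_ker] at hx ⊢
      rw [hfS, hx, mul_zero])
    obtain ⟨b, U, h1, h2⟩ := ih (LinearMap.ker f) hfk T'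
    have hli : ∀ (c : ℂ), ∀ x ∈ LinearMap.ker f, c • y + x = 0 → c = 0 := by
      intro c x hx h
      have := congrArg f h
      rw [map_add, map_smul, LinearMap.mem_ker.1 hx, map_zero, add_zero, smul_eq_mul] at this
      exact (mul_eq_zero.1 this).resolve_right hy
    have hsp : ∀ z : V, ∃ c : ℂ, z + c • y ∈ LinearMap.ker f := by
      intro z
      refine ⟨- (f z / f y), ?_⟩
      rw [LinearMap.mem_ker, map_add, map_smul, smul_eq_mul]
      field_simp
      ring
    let B := Module.Basis.mkFinCons y b hli hsp
    have hB : (B : Fin (k+1) → V) = Fin.cons y ((↑) ∘ b) := Module.Basis.coe_mkFinCons y b hli hsp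
    refine ⟨B, Matrix.of fun i j => Fin.cases (B.repr (T y) i)
      (fun j' => Fin.cases 0 (fun i' => U i' j') i) j, ?_, ?_⟩
    · intro j
      refine Fin.cases ?_ (fun j => ?_) j
      · simp only [Matrix.of_apply, Fin.cases_zero]
        rw [B.sum_repr (T y), hB, Fin.cons_zero]
      · simp only [Matrix.of_apply, Fin.cases_succ]
        rw [Fin.sum_univ_succ]
        simp only [Fin.cases_zero, Fin.cases_succ, zero_smul, zero_add, hB, Fin.cons_succ,
          Function.comp]
        have := congrArg (Subtype.val) (h1 j)
        simpa [T'] using this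
    · intro i j
      refine Fin.cases ?_ (fun j => ?_) j
      · intro h; exact absurd h (Fin.not_lt_zero i)
      · refine Fin.cases ?_ (fun i => ?_) i
        · intro _; rfl
        · intro h; exact h2 i j (Fin.succ_lt_succ_iff.1 h)

lemma tri_matrix (A : Matrix (Fin n) (Fin n) ℂ) (w : Fin n → ℂ)
    (hA : A.charpoly = ∏ i, (Polynomial.X - Polynomial.C (w i))) :
    ∃ P U : Matrix (Fin n) (Fin n) ℂ, IsUnit P ∧ A * P = P * U ∧ (∀ i j, i < j → U i j = 0) ∧
      ∀ j, ∃ k, U j j = w k := by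
  obtain ⟨b, U, h1, h2⟩ := tri n (Fin n → ℂ) (by simp) (Matrix.toLin' A)
  let P : Matrix (Fin n) (Fin n) ℂ := Matrix.of fun i j => b j i
  have hP : IsUnit P := by
    rw [← Matrix.linearIndependent_cols_iff_isUnit]
    exact b.linearIndependent
  have hAP : A * P = P * U := by
    ext i j
    have := congrFun (h1 j) i
    rw [Matrix.toLin'_apply] at this
    simp only [Finset.sum_apply, Pi.smul_apply, smul_eq_mul] at this
    rw [Matrix.mul_apply, Matrix.mul_apply]
    refine this.trans (Finset.sum_congr rfl fun k _ => mul_comm _ _)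
  refine ⟨P, U, hP, hAP, h2, fun j => ?_⟩
  have hU : U.charpoly = A.charpoly := by
    obtain ⟨u, hu⟩ := hP
    have : U = (↑u⁻¹ : Matrix (Fin n) (Fin n) ℂ) * A * u := by
      rw [mul_assoc, hu, hAP, ← hu, ← mul_assoc, Units.inv_mul, one_mul]
    rw [this]
    rw [Matrix.coe_units_inv]
    exact Matrix.charpoly_units_conj' u A
  have hU2 : U.charpoly = ∏ i, (Polynomial.X - Polynomial.C (U i i)) := by
    rw [← Matrix.charpoly_transpose, Matrix.charpoly_of_isUpperTriangular]
    · rfl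
    · intro i j hij
      exact h2 j i hij
  have h3 : (∏ i, (Polynomial.X - Polynomial.C (w i))).eval (U j j) = 0 := by
    rw [← hA, ← hU, hU2, Polynomial.eval_prod]
    exact Finset.prod_eq_zero (Finset.mem_univ j) (by simp)
  rw [Polynomial.eval_prod, Finset.prod_eq_zero_iff] at h3
  obtain ⟨k, _, hk⟩ := h3
  exact ⟨k, by simpa [sub_eq_zero] using hk⟩

lemma mem_sq {g : On n} (hg : g ∈ mId n) (h : ∀ i, ev0A n (pd i g) = 0) : g ∈ mId n ^ 2 := by
  classical
  rw [mId_eq, Ideal.mem_span_range_iff_exists_fun] at hg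
  obtain ⟨a, rfl⟩ := hg
  refine Ideal.sum_mem _ fun i _ => ?_
  rw [pow_two]
  refine Ideal.mul_mem_mul ?_ (coordG_mem i)
  rw [mem_mId]
  have := h i
  rw [pd_sum, map_sum] at this
  simp only [pd_mul_ev, mem_mId.1 (coordG_mem _), zero_mul, add_zero, pd_coordG] at this
  rw [Finset.sum_eq_single i] at this
  · simpa using this
  · intro j _ hj
    simp [hj.symm]
  · simp

/-- partial derivative on convergent power series -/
def dR (j : Fin n) : RC n →ₗ[ℂ] RC n where
  toFun c := ⟨dP j c.1, conv_dP j c.2⟩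
  map_add' a b := Subtype.ext (map_add (dP j) a.1 b.1)
  map_smul' r a := Subtype.ext ((dP j).map_smul r a.1)

lemma dR_mul (j : Fin n) (a b : RC n) : dR j (a * b) = a * dR j b + b * dR j a :=
  Subtype.ext ((dP j).leibniz a.1 b.1)

lemma dR_XR (i j : Fin n) : dR j (XR i : RC n) = if i = j then 1 else 0 := by
  apply Subtype.ext
  change dP j (MvPowerSeries.X i) = _
  rw [dP, MvPowerSeries.pderiv_X]
  by_cases h : i = j
  · subst h; simp
  · simp [h]

lemma vfD_mem {δ : Fin n → On n} (hδ : ∀ i, δ i ∈ mId n) (g : On n) : vfD δ g ∈ mId n := by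
  rw [vfD_apply, applyVF]
  exact Ideal.sum_mem _ fun i _ => Ideal.mul_mem_right _ _ (hδ i)

lemma q_bound {j : Fin n} {α : Idx n} (h : 2 ≤ ∑ i, α i) :
    n + 2 + (j : ℕ) < Nq (fun i : Fin n => n + 2 + (i : ℕ)) α := by
  have h1 : (n + 2) ^ (∑ i, α i) ≤ Nq (fun i : Fin n => n + 2 + (i : ℕ)) α := by
    rw [Nq, ← Finset.prod_pow_eq_pow_sum]
    refine Finset.prod_le_prod' fun i _ => ?_
    exact Nat.pow_le_pow_left (by omega) _
  have h2 : (n + 2) ^ 2 ≤ (n + 2) ^ (∑ i, α i) := Nat.pow_le_pow_right (by omega) h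
  have h3 := j.2
  nlinarith

lemma exists_bounds (w : Fin n → ℚ) (hw : ∀ i, 0 < w i) :
    ∃ a b : ℚ, 0 < a ∧ (∀ i, a ≤ w i) ∧ ∀ i, w i ≤ b := by
  rcases isEmpty_or_nonempty (Fin n) with h0 | h0
  · exact ⟨1, 1, one_pos, fun i => h0.elim i, fun i => h0.elim i⟩
  · obtain ⟨i, hi⟩ := Finite.exists_min w
    obtain ⟨j, hj⟩ := Finite.exists_max w
    exact ⟨w i, w j, hw i, hi, hj⟩

theorem poincare_On {δ : Fin n → On n} (hδ : ∀ i, δ i ∈ mId n) (w : Fin n → ℚ)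
    (hw : ∀ i, 0 < w i) (hE : EigsEq δ w) :
    ∃ M : ℕ, 2 ≤ M ∧ ∀ k, ∀ h ∈ mId n ^ M, ∃ g ∈ mId n ^ M, vfD δ g - (w k : ℂ) • g = h := by
  classical
  obtain ⟨P, U, hP, hAP, hU, hUw⟩ := tri_matrix (linPart δ) (fun i => (w i : ℂ)) hE
  choose κ hκ using hUw
  obtain ⟨wm, wM, hwm, hwm1, hwM⟩ := exists_bounds w hw
  obtain ⟨M0, hM0⟩ := exists_nat_ge (2 * wM / wm)
  rw [div_le_iff₀ hwm] at hM0
  let M := M0 + 2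
  have hM : 2 * wM ≤ M * wm := by
    simp only [M]; push_cast; linarith
  let ℓ : Fin n → On n := fun j => ∑ k, P k j • coordG k
  have hℓm : ∀ j, ℓ j ∈ mId n := fun j =>
    Ideal.sum_mem _ fun k _ => smul_mem_ideal _ _ (coordG_mem k)
  have hjac : jac ℓ = P := by
    ext i j
    simp only [jac, Matrix.of_apply, ℓ]
    rw [pd_sum, map_sum]
    simp only [pd_smul, pd_coordG, map_smul]
    rw [Finset.sum_eq_single i]
    · simp
    · intro b _ hb; simp [hb.symm]
    · simp
  obtain ⟨φ, hφ⟩ := exists_coordChange ℓ hℓm (by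
    have : (Matrix.of fun j i => ev0A n (pd i (ℓ j))) = P.transpose := by
      rw [← hjac]; rfl
    rw [this]
    exact (Matrix.isUnit_transpose P).2 hP)
  have hφ' : ∀ j, (pullE φ).symm (coordG j) = ℓ j := fun j => by rw [← hφ, AlgEquiv.symm_apply_apply]
  have hspan : mId n = Ideal.span (Set.range ℓ) := by
    have := span_y φ
    simp only [hφ'] at this
    exact this
  let F : RC n →ₐ[ℂ] On n := ((pullE φ).symm : On n →ₐ[ℂ] On n).comp (ev n)
  have hFX : ∀ j, F (XR j) = ℓ j := fun j => by
    rw [← hφ', ← ev_X]; rfl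
  have hFs : Function.Surjective F := (pullE φ).symm.surjective.comp ev_surjective
  have hmap : (mR n).map F = mId n := by
    rw [mR, Ideal.map_span, hspan, ← Set.range_comp]
    congr 2
    exact funext hFX
  have hlift : ∀ (N : ℕ) (h : On n), h ∈ mId n ^ N → ∃ c : RC n, ordGE N c.1 ∧ F c = h := by
    intro N h hh
    rw [← hmap, ← Ideal.map_pow, Ideal.mem_map_iff_of_surjective F hFs] at hh
    obtain ⟨c, hc, rfl⟩ := hh
    exact ⟨c, ordGE_of_mem hc, rfl⟩
  have he : ∀ j, vfD δ (ℓ j) - ∑ i, U i j • ℓ i ∈ mId n ^ 2 := by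
    intro j
    apply mem_sq
    · exact sub_mem (vfD_mem hδ _) (Ideal.sum_mem _ fun i _ => smul_mem_ideal _ _ (hℓm i))
    · intro i
      have h1 : pd i (vfD δ (ℓ j) - ∑ i, U i j • ℓ i) =
        pd i (vfD δ (ℓ j)) - pd i (∑ i, U i j • ℓ i) := map_sub (pdD i) _ _
      have h2 := congrFun (congrFun (linPart_mul_jac hδ ℓ) i) j
      rw [hjac, hAP] at h2
      simp only [jac, Matrix.of_apply] at h2
      rw [h1, map_sub, ← h2, pd_sum, map_sum, Matrix.mul_apply, sub_eq_zero]
      refine Finset.sum_congr rfl fun k _ => ?_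
      rw [pd_smul, map_smul, smul_eq_mul, mul_comm]
      congr 1
      rw [← hjac]; rfl
  choose C hC hFC using fun j => hlift 2 _ (he j)
  let B : Fin n → RC n := fun j => C j + ∑ i, (if j < i then U i j else 0) • XR i
  have hFB : ∀ j, F ((w (κ j) : ℂ) • XR j + B j) = vfD δ (ℓ j) := by
    intro j
    have h1 : ∑ i, U i j • ℓ i = (w (κ j) : ℂ) • ℓ j + ∑ i, (if j < i then U i j else 0) • ℓ i := by
      have h2 : ∀ i, U i j = (if i = j then (w (κ j) : ℂ) else 0) + (if j < i then U i j else 0) := by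
        intro i
        rcases lt_trichotomy i j with h | h | h
        · rw [hU i j h, if_neg h.ne, if_neg h.not_gt, add_zero]
        · subst h; simp [hκ]
        · simp [h, h.ne']
      rw [Finset.sum_congr rfl fun i _ => by rw [h2 i, add_smul], Finset.sum_add_distrib]
      congr 1
      simp
    simp only [B, map_add, map_smul, map_sum, hFX, hFC, h1]
    abel
  have hcoe : ∀ j, ((B j : RC n) : PS n) = (C j).1 +
      ∑ i, (if j < i then U i j else 0) • (MvPowerSeries.X i : PS n) := by
    intro j
    simp only [B]
    rw [AddMemClass.coe_add, AddSubmonoidClass.coe_finsetSum]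
    rfl
  have hcX : ∀ (i : Fin n) (α : Idx n), MvPowerSeries.coeff α (MvPowerSeries.X i : PS n) ≠ 0 →
      α = Finsupp.single i 1 := by
    intro i α h
    rw [MvPowerSeries.coeff_X] at h
    by_contra h'
    rw [if_neg h'] at h
    exact h rfl
  have hBs : ∀ j α, MvPowerSeries.coeff α (B j).1 ≠ 0 →
      (fun i : Fin n => n + 2 + (i : ℕ)) j < Nq (fun i : Fin n => n + 2 + (i : ℕ)) α := by
    intro j α h
    by_cases hα : 2 ≤ ∑ i, α i
    · exact q_bound hα
    · rw [hcoe, map_add, hC j α (by omega), zero_add, map_sum] at h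
      obtain ⟨i, _, hi⟩ := Finset.exists_ne_zero_of_sum_ne_zero h
      rw [MvPowerSeries.coeff_smul] at hi
      have h1 := hcX i α (right_ne_zero_of_mul hi)
      have h2 : j < i := by
        by_contra h'
        simp [h'] at hi
      rw [h1, Nq_single]
      have : (j : ℕ) < i := h2
      simp only
      omega
  have hB1 : ∀ j, ordGE 1 (B j).1 := by
    intro j
    rw [hcoe]
    refine ordGE_add (fun α hα => hC j α (by omega)) (ordGE_sum _ fun i _ => ?_)
    intro α hα
    have h3 : MvPowerSeries.coeff α (MvPowerSeries.X i : PS n) = 0 := ordGE_XR i α hα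
    rw [MvPowerSeries.coeff_smul, h3, mul_zero]
  -- intertwining
  let E : RC n →ₗ[ℂ] On n := ∑ j, (LinearMap.mulLeft ℂ (vfD δ (ℓ j))) ∘ₗ F.toLinearMap ∘ₗ dR j -
    (vfD δ : On n →ₗ[ℂ] On n) ∘ₗ F.toLinearMap
  have hEa : ∀ c, E c = ∑ j, vfD δ (ℓ j) * F (dR j c) - vfD δ (F c) := by
    intro c
    simp only [E, LinearMap.sub_apply, LinearMap.sum_apply]
    rfl
  have hE0 : ∀ c, E c = 0 := by
    refine der_zero F E ?_ XR RC_dec ?_ fun i => by rw [hFX]; exact hℓm i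
    · intro a b
      rw [hEa, hEa, hEa, map_mul, Derivation.leibniz]
      simp only [dR_mul, map_add, map_mul, mul_add, Finset.sum_add_distrib, mul_sub, Finset.mul_sum,
        smul_eq_mul]
      rw [Finset.sum_congr rfl fun j _ => mul_left_comm (vfD δ (ℓ j)) (F a) _,
        Finset.sum_congr rfl fun j _ => mul_left_comm (vfD δ (ℓ j)) (F b) _]
      abel
    · intro i
      rw [hEa, hFX, Finset.sum_eq_single i]
      · rw [dR_XR, if_pos rfl, map_one, mul_one, sub_self]
      · intro j _ hj; rw [dR_XR, if_neg hj.symm, map_zero, mul_zero]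
      · simp
  refine ⟨M, by simp [M], fun k h hh => ?_⟩
  obtain ⟨c, hc, rfl⟩ := hlift M h hh
  obtain ⟨g, hg, hgM, hgeq⟩ := poincare_PS (fun j => w (κ j)) wm hwm (fun i => hwm1 _) M (by simp [M])
    (w k) (by have := hwM k; linarith) (fun i : Fin n => n + 2 + (i : ℕ)) (fun i => by omega)
    (fun j => (B j).1) (fun j => (B j).2) hBs hB1 c.1 c.2 hc
  let g' : RC n := ⟨g, hg⟩
  refine ⟨F g', ?_, ?_⟩
  · rw [← hmap, ← Ideal.map_pow]
    exact Ideal.mem_map_of_mem _ (mem_mR_pow hgM)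
  · have h1 : ∑ j, ((w (κ j) : ℂ) • XR j + B j) * dR j g' - (w k : ℂ) • g' = c := by
      apply Subtype.ext
      rw [← hgeq, AddSubgroupClass.coe_sub, AddSubmonoidClass.coe_finsetSum]
      rfl
    have h2 := hE0 g'
    rw [hEa, sub_eq_zero] at h2
    rw [← h1, ← h2, map_sub, map_smul, map_sum]
    congr 1
    exact Finset.sum_congr rfl fun j _ => by rw [map_mul, hFB]

/-- the shifted operator -/
def sh (T : Derivation ℂ (On n) (On n)) (d : ℚ) : Module.End ℂ (On n) :=
  (T : On n →ₗ[ℂ] On n) - (d : ℂ) • (1 : Module.End ℂ (On n))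

/-- generalised eigenspaces of a derivation -/
def GE (T : Derivation ℂ (On n) (On n)) (d : ℚ) : Submodule ℂ (On n) :=
  Module.End.maxGenEigenspace (T : Module.End ℂ (On n)) (d : ℂ)

lemma mem_GE {T : Derivation ℂ (On n) (On n)} {d : ℚ} {g : On n} :
    g ∈ GE T d ↔ ∃ k, ((sh T d) ^ k) g = 0 :=
  Module.End.mem_maxGenEigenspace _ _ _

lemma GE_of_eig {T : Derivation ℂ (On n) (On n)} {d : ℚ} {g : On n} (h : T g = (d : ℂ) • g) :
    g ∈ GE T d := by
  rw [mem_GE]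
  refine ⟨1, ?_⟩
  rw [pow_one]
  change T g - (d : ℂ) • g = 0
  rw [h, sub_self]

lemma GE_mul_aux (T : Derivation ℂ (On n) (On n)) (a b : ℚ) (N : ℕ) : ∀ (p q : ℕ) (x y : On n),
    p + q = N → ((sh T a) ^ p) x = 0 →
    ((sh T b) ^ q) y = 0 →
    ((sh T (a + b)) ^ N) (x * y) = 0 := by
  induction N with
  | zero =>
    intro p q x y h hx hy
    obtain rfl : p = 0 := by omega
    have hx' : x = 0 := hx
    rw [hx', zero_mul, map_zero]
  | succ N ih =>
    intro p q x y h hx hy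
    rcases p with _ | p
    · have hx' : x = 0 := hx
      rw [hx', zero_mul, map_zero]
    rcases q with _ | q
    · have hy' : y = 0 := hy
      rw [hy', mul_zero, map_zero]
    rw [pow_succ, Module.End.mul_apply]
    have key : (sh T (a + b)) (x * y) =
        ((sh T a) x) * y +
          x * ((sh T b) y) := by
      change T (x * y) - ((a + b : ℚ) : ℂ) • (x * y) = (T x - (a : ℂ) • x) * y + x * (T y - (b : ℂ) • y)
      rw [Derivation.leibniz]
      push_cast
      simp only [smul_eq_mul, add_smul, sub_mul, mul_sub, smul_mul_assoc, mul_smul_comm]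
      rw [mul_comm y]
      abel
    rw [key, map_add, ih p (q+1) _ y (by omega) ?_ hy, ih (p+1) q x _ (by omega) hx ?_, add_zero]
    · rw [← Module.End.mul_apply, ← pow_succ]; exact hy
    · rw [← Module.End.mul_apply, ← pow_succ]; exact hx

lemma GE_mul {T : Derivation ℂ (On n) (On n)} {a b : ℚ} {x y : On n} (hx : x ∈ GE T a)
    (hy : y ∈ GE T b) : x * y ∈ GE T (a + b) := by
  rw [mem_GE] at *
  obtain ⟨p, hp⟩ := hx
  obtain ⟨q, hq⟩ := hy
  exact ⟨p + q, GE_mul_aux T a b (p + q) p q x y rfl hp hq⟩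

lemma mapQ_pow {E : Type*} [AddCommGroup E] [Module ℂ E] (T : Module.End ℂ E) (p : Submodule ℂ E)
    (hp : p ≤ p.comap T) (c : ℂ) (k : ℕ) : ∀ (g : E),
    (((p.mapQ p T hp : Module.End ℂ (E ⧸ p)) - c • 1) ^ k) (Submodule.Quotient.mk g) =
      Submodule.Quotient.mk (((T - c • 1) ^ k) g) := by
  induction k with
  | zero => intro g; rfl
  | succ k ih =>
    intro g
    rw [pow_succ, Module.End.mul_apply, pow_succ, Module.End.mul_apply, ← ih]
    congr 1

lemma proj_mem {T : Derivation ℂ (On n) (On n)} (p : Submodule ℂ (On n)) (hp : ∀ g ∈ p, T g ∈ p)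
    (a : ℚ →₀ On n) (ha : ∀ e, a e ∈ GE T e) (hs : (a.sum fun _ x => x) ∈ p) (e : ℚ) : a e ∈ p := by
  classical
  let Tl : Module.End ℂ (On n) := (T : Module.End ℂ (On n))
  have hp' : p ≤ p.comap Tl := hp
  let Tq : Module.End ℂ (On n ⧸ p) := p.mapQ p Tl hp'
  have hind : iSupIndep fun e : ℚ => Tq.maxGenEigenspace (e : ℂ) :=
    (Module.End.independent_maxGenEigenspace Tq).comp (f := fun e : ℚ => (e : ℂ)) Rat.cast_injective
  have hm : ∀ e : ℚ, (Submodule.Quotient.mk (a e) : On n ⧸ p) ∈ Tq.maxGenEigenspace (e : ℂ) := by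
    intro e
    obtain ⟨k, hk⟩ := mem_GE.1 (ha e)
    rw [Module.End.mem_maxGenEigenspace]
    refine ⟨k, ?_⟩
    refine (mapQ_pow Tl p hp' (e : ℂ) k (a e)).trans ?_
    change Submodule.Quotient.mk ((sh T e ^ k) (a e)) = 0
    rw [hk, Submodule.Quotient.mk_zero]
  rw [iSupIndep_def] at hind
  have h0 := Submodule.disjoint_def.1 (hind e) _ (hm e) ?_
  · exact (Submodule.Quotient.mk_eq_zero p).1 h0
  by_cases he : e ∈ a.support
  · have h1 : a e = (a.sum fun _ x => x) - ∑ j ∈ a.support.erase e, a j := by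
      rw [Finsupp.sum, ← Finset.add_sum_erase _ _ he]; abel
    rw [h1, Submodule.Quotient.mk_sub, (Submodule.Quotient.mk_eq_zero p).2 hs, zero_sub]
    refine neg_mem ?_
    change p.mkQ _ ∈ _
    rw [map_sum]
    refine Submodule.sum_mem _ fun j hj => ?_
    exact Submodule.mem_iSup_of_mem j (Submodule.mem_iSup_of_mem (Finset.ne_of_mem_erase hj) (hm j))
  · rw [Finsupp.notMem_support_iff.1 he, Submodule.Quotient.mk_zero]
    exact zero_mem _

/-- simultaneous eigenspaces -/
def Vd (T D : Derivation ℂ (On n) (On n)) (d : ℚ) : Submodule ℂ (On n) :=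
  GE T d ⊓ LinearMap.ker ((D : Module.End ℂ (On n)) - (d : ℂ) • 1)

lemma mem_Vd {T D : Derivation ℂ (On n) (On n)} {d : ℚ} {g : On n} :
    g ∈ Vd T D d ↔ g ∈ GE T d ∧ D g = (d : ℂ) • g := by
  rw [Vd, Submodule.mem_inf, LinearMap.mem_ker]
  refine and_congr_right fun _ => ?_
  change D g - (d : ℂ) • g = 0 ↔ _
  rw [sub_eq_zero]

/-- the sum of the simultaneous eigenspaces of weight at least `c` -/
def Wc (T D : Derivation ℂ (On n) (On n)) (c : ℚ) : Submodule ℂ (On n) :=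
  ⨆ e : ℚ, ⨆ _ : c ≤ e, Vd T D e

lemma Vd_le_Wc {T D : Derivation ℂ (On n) (On n)} {c e : ℚ} (h : c ≤ e) : Vd T D e ≤ Wc T D c :=
  le_iSup_of_le e (le_iSup_of_le h le_rfl)

lemma Wc_anti {T D : Derivation ℂ (On n) (On n)} {c e : ℚ} (h : c ≤ e) : Wc T D e ≤ Wc T D c :=
  iSup_le fun _ => iSup_le fun he => Vd_le_Wc (h.trans he)

lemma Wc_mul {T D : Derivation ℂ (On n) (On n)} (a b : ℚ) : Wc T D a * Wc T D b ≤ Wc T D (a + b) := by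
  rw [Wc, Wc, Submodule.iSup_mul]
  refine iSup_le fun e => ?_
  rw [Submodule.iSup_mul]
  refine iSup_le fun he => ?_
  rw [Submodule.mul_iSup]
  refine iSup_le fun e' => ?_
  rw [Submodule.mul_iSup]
  refine iSup_le fun he' => ?_
  refine le_trans ?_ (Vd_le_Wc (add_le_add he he'))
  rw [Submodule.mul_le]
  intro x hx y hy
  rw [mem_Vd] at *
  refine ⟨GE_mul hx.1 hy.1, ?_⟩
  rw [Derivation.leibniz, hx.2, hy.2]
  push_cast
  simp only [smul_eq_mul, mul_smul_comm, add_smul]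
  rw [mul_comm y x, add_comm]

lemma mem_Wc {T D : Derivation ℂ (On n) (On n)} {c : ℚ} {g : On n} (hg : g ∈ Wc T D c) :
    ∃ a : ℚ →₀ On n, (∀ e, a e ∈ Vd T D e) ∧ (∀ e, e < c → a e = 0) ∧ (a.sum fun _ x => x) = g := by
  rw [Wc, Submodule.mem_iSup_iff_exists_finsupp] at hg
  obtain ⟨a, ha, h⟩ := hg
  refine ⟨a, fun e => ?_, fun e he => ?_, h⟩
  · exact (iSup_le fun _ => le_rfl : (⨆ _ : c ≤ e, Vd T D e) ≤ Vd T D e) (ha e)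
  · have := ha e
    rw [iSup_neg (not_le.2 he)] at this
    simpa using this

section grading

variable {T D : Derivation ℂ (On n) (On n)} {y : Fin n → On n} {w : Fin n → ℚ} {wm : ℚ}

lemma Sy_le_Wc (hwm : ∀ i, wm ≤ w i) (hyV : ∀ i, y i ∈ Vd T D (w i)) (K : ℕ) :
    Sy y ^ K ≤ Wc T D (K * wm) := by
  induction K with
  | zero =>
    rw [pow_zero, Submodule.one_le]
    refine Vd_le_Wc (e := 0) (by simp) (mem_Vd.2 ⟨GE_of_eig ?_, ?_⟩) <;> simp
  | succ K ih =>
    rw [pow_succ]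
    refine (mul_le_mul' ih (?_ : Sy y ≤ Wc T D wm)).trans ((Wc_mul _ _).trans ?_)
    · rw [Sy, Submodule.span_le]
      rintro _ ⟨i, rfl⟩
      exact Vd_le_Wc (hwm i) (hyV i)
    · refine le_of_eq ?_
      congr 1
      push_cast
      ring

lemma mC_le_Wc (hwm0 : 0 < wm) (hwm : ∀ i, wm ≤ w i) (hyV : ∀ i, y i ∈ Vd T D (w i))
    (hy : mId n = Ideal.span (Set.range y)) (K L : ℕ) :
    mC n K ≤ Wc T D (K * wm) ⊔ mC n L := by
  rcases le_total L K with h | h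
  · exact (mC_anti h).trans le_sup_right
  induction L, h using Nat.le_induction with
  | base => exact le_sup_right
  | succ L hL ih =>
    refine ih.trans (sup_le le_sup_left ?_)
    refine (mC_le hy L).trans (sup_le ?_ le_sup_right)
    refine le_trans ?_ le_sup_left
    refine (Sy_le_Wc hwm hyV L).trans (Wc_anti ?_)
    gcongr

lemma exists_dec (hwm0 : 0 < wm) (hwm : ∀ i, wm ≤ w i) (hyV : ∀ i, y i ∈ Vd T D (w i))
    (hy : mId n = Ideal.span (Set.range y)) (K L : ℕ) {g : On n} (hg : g ∈ mId n ^ K) :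
    ∃ a : ℚ →₀ On n, (∀ e, a e ∈ Vd T D e) ∧ (∀ e, e < K * wm → a e = 0) ∧
      g - (a.sum fun _ x => x) ∈ mId n ^ L := by
  obtain ⟨x, hx, t, ht, rfl⟩ := Submodule.mem_sup.1 (mC_le_Wc hwm0 hwm hyV hy K L hg)
  obtain ⟨a, h1, h2, h3⟩ := mem_Wc hx
  refine ⟨a, h1, h2, ?_⟩
  rw [h3, add_sub_cancel_left]
  exact ht

lemma sum_sub (a b : ℚ →₀ On n) : ((a - b).sum fun _ x => x) =
    (a.sum fun _ x => x) - (b.sum fun _ x => x) :=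
  Finsupp.sum_sub_index fun _ _ _ => rfl

/-- comparison with a single element -/
lemma proj_single (p : Submodule ℂ (On n)) (hp : ∀ g ∈ p, T g ∈ p)
    (a : ℚ →₀ On n) (ha : ∀ e, a e ∈ Vd T D e) (d : ℚ) {g : On n} (hg : g ∈ GE T d)
    (hs : g - (a.sum fun _ x => x) ∈ p) : g - a d ∈ p := by
  classical
  have := proj_mem (T := T) p hp (Finsupp.single d g - a) (fun e => ?_) ?_ d
  · simpa using this
  · rw [Finsupp.sub_apply]
    refine sub_mem ?_ (mem_Vd.1 (ha e)).1
    rw [Finsupp.single_apply]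
    split_ifs with h
    · rw [← h]; exact hg
    · exact zero_mem _
  · rw [sum_sub, Finsupp.sum_single_index rfl]
    exact hs

lemma Vd_inf_pow (hT : ∀ g ∈ mId n, T g ∈ mId n)
    (hwm0 : 0 < wm) (hwm : ∀ i, wm ≤ w i) (hyV : ∀ i, y i ∈ Vd T D (w i))
    (hy : mId n = Ideal.span (Set.range y)) {K : ℕ} {d : ℚ} (hd : d < K * wm) {g : On n}
    (hg : g ∈ mId n ^ K) (hgV : g ∈ GE T d) : g = 0 := by
  refine eq_zero_of_mem_pow fun L => ?_
  obtain ⟨a, h1, h2, h3⟩ := exists_dec hwm0 hwm hyV hy K L hg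
  have := proj_single (mC n L) (der_pow_mem hT L) a h1 d hgV h3
  rw [h2 d hd, sub_zero] at this
  exact this

lemma D_eq_of_GE (hT : ∀ g ∈ mId n, T g ∈ mId n) (hD : ∀ g ∈ mId n, D g ∈ mId n)
    (hwm0 : 0 < wm) (hwm : ∀ i, wm ≤ w i) (hyV : ∀ i, y i ∈ Vd T D (w i))
    (hy : mId n = Ideal.span (Set.range y)) {d : ℚ} {g : On n} (hgV : g ∈ GE T d) :
    D g = (d : ℂ) • g := by
  rw [← sub_eq_zero]
  refine eq_zero_of_mem_pow fun L => ?_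
  obtain ⟨a, h1, h2, h3⟩ := exists_dec (g := g) hwm0 hwm hyV hy 0 L (by simp)
  have h4 : g - a d ∈ mId n ^ L := proj_single (mC n L) (der_pow_mem hT L) a h1 d hgV h3
  have h5 := (mem_Vd.1 (h1 d)).2
  have h6 : D g - (d : ℂ) • g = D (g - a d) - (d : ℂ) • (g - a d) := by
    rw [map_sub, h5, smul_sub]; abel
  rw [h6]
  exact sub_mem (der_pow_mem hD L _ h4) (smul_mem_ideal _ _ h4)

theorem ideal_homog (hT : ∀ g ∈ mId n, T g ∈ mId n)
    (hwm0 : 0 < wm) (hwm : ∀ i, wm ≤ w i) (hyV : ∀ i, y i ∈ Vd T D (w i))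
    (hy : mId n = Ideal.span (Set.range y)) (I : Ideal (On n)) (hI : I ≤ mId n)
    (hTI : ∀ g ∈ I, T g ∈ I) :
    Ideal.span {h | h ∈ I ∧ ∃ d : ℚ, 0 < d ∧ D h = (d : ℂ) • h} = I := by
  set J := Ideal.span {h | h ∈ I ∧ ∃ d : ℚ, 0 < d ∧ D h = (d : ℂ) • h} with hJ
  apply le_antisymm
  · rw [hJ, Ideal.span_le]
    exact fun h hh => hh.1
  intro g hg
  have hpI : ∀ L : ℕ, ∀ x ∈ (I ⊔ mId n ^ L).restrictScalars ℂ,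
      T x ∈ (I ⊔ mId n ^ L).restrictScalars ℂ := by
    intro L x hx
    obtain ⟨u, hu, v, hv, rfl⟩ := Submodule.mem_sup.1 hx
    rw [map_add]
    exact Submodule.mem_sup.2 ⟨_, hTI u hu, _, der_pow_mem hT L v hv, rfl⟩
  have hdec := fun L => exists_dec (g := g) hwm0 hwm hyV hy 0 L (by simp)
  choose a ha1 ha2 ha3 using hdec
  have haI : ∀ L d, a L d ∈ I ⊔ mId n ^ L := by
    intro L d
    refine proj_mem (T := T) ((I ⊔ mId n ^ L).restrictScalars ℂ) (hpI L) (a L)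
      (fun e => (mem_Vd.1 (ha1 L e)).1) ?_ d
    have : (a L).sum (fun _ x => x) = g + - (g - (a L).sum (fun _ x => x)) := by abel
    rw [this]
    exact Submodule.mem_sup.2 ⟨_, hg, _, neg_mem (ha3 L), rfl⟩
  have hdiff : ∀ K L d, K ≤ L → a L d - a K d ∈ mId n ^ K := by
    intro K L d hKL
    refine proj_mem (T := T) (mC n K) (der_pow_mem hT K) (a L - a K)
      (fun e => sub_mem (mem_Vd.1 (ha1 L e)).1 (mem_Vd.1 (ha1 K e)).1) ?_ d
    rw [sum_sub]
    have : (a L).sum (fun _ x => x) - (a K).sum (fun _ x => x) =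
      (g - (a K).sum (fun _ x => x)) - (g - (a L).sum (fun _ x => x)) := by abel
    rw [this]
    exact sub_mem (ha3 K) (Ideal.pow_le_pow_right hKL (ha3 L))
  have hmain : ∀ K d, a K d ∈ J ⊔ mId n ^ K := by
    intro K d
    obtain ⟨K0, hK0⟩ := exists_nat_gt (d / wm)
    rw [div_lt_iff₀ hwm0] at hK0
    let K' := max K K0
    have hK' : d < K' * wm := hK0.trans_le (by
      refine mul_le_mul_of_nonneg_right ?_ hwm0.le
      exact_mod_cast le_max_right _ _)
    have heq : ∀ L, K' ≤ L → a L d = a K' d := by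
      intro L hL
      rw [← sub_eq_zero]
      exact Vd_inf_pow hT hwm0 hwm hyV hy hK' (hdiff K' L d hL)
        (sub_mem (mem_Vd.1 (ha1 L d)).1 (mem_Vd.1 (ha1 K' d)).1)
    have hin : a K' d ∈ I := by
      refine closed_ideal I fun L => ?_
      have h1 := haI (max K' L) d
      rw [heq _ (le_max_left _ _)] at h1
      exact sup_le_sup_left (Ideal.pow_le_pow_right (le_max_right _ _)) I h1
    have hinJ : a K' d ∈ J := by
      by_cases hd : 0 < d
      · exact Ideal.subset_span ⟨hin, d, hd, (mem_Vd.1 (ha1 K' d)).2⟩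
      · have : a K' d = 0 := Vd_inf_pow (K := 1) hT hwm0 hwm hyV hy (by push_cast; linarith)
          (by rw [pow_one]; exact hI hin) (mem_Vd.1 (ha1 K' d)).1
        rw [this]; exact zero_mem _
    have : a K d = a K' d + - (a K' d - a K d) := by abel
    rw [this]
    exact Submodule.mem_sup.2 ⟨_, hinJ, _, neg_mem (hdiff K K' d (le_max_left _ _)), rfl⟩
  refine closed_ideal J fun K => ?_
  have : g = (a K).sum (fun _ x => x) + (g - (a K).sum (fun _ x => x)) := by abel
  rw [this]
  refine add_mem ?_ ((le_sup_right : mId n ^ K ≤ J ⊔ mId n ^ K) (ha3 K))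
  exact Ideal.sum_mem _ fun e _ => hmain K e

end grading

/-- the linear part of a function germ -/
def Lp (n : ℕ) : On n →ₗ[ℂ] (Fin n → ℂ) :=
  LinearMap.pi fun i => (ev0A n).toLinearMap ∘ₗ (pdD i : On n →ₗ[ℂ] On n)

lemma Lp_apply (g : On n) (i : Fin n) : Lp n g i = ev0A n (pd i g) := rfl

lemma Lp_vfD {δ : Fin n → On n} (hδ : ∀ i, δ i ∈ mId n) (g : On n) :
    Lp n (vfD δ g) = Matrix.toLin' (linPart δ) (Lp n g) := by
  ext i
  have := congrFun (congrFun (linPart_mul_jac hδ fun _ => g) i) i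
  rw [Matrix.mul_apply] at this
  exact this.symm

lemma Lp_sq {g : On n} (hg : g ∈ mId n ^ 2) : Lp n g = 0 := by
  rw [pow_two] at hg
  refine Submodule.mul_induction_on hg ?_ fun x y hx hy => by rw [map_add, hx, hy, add_zero]
  intro a ha b hb
  ext i
  rw [Lp_apply, pd_mul_ev, mem_mId.1 ha, mem_mId.1 hb]
  simp

lemma Lp_sh {δ : Fin n → On n} (hδ : ∀ i, δ i ∈ mId n) (c : ℂ) (k : ℕ) : ∀ g : On n,
    Lp n ((((vfD δ : On n →ₗ[ℂ] On n) - c • (1 : Module.End ℂ (On n))) ^ k : Module.End ℂ (On n)) g) =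
      ((Matrix.toLin' (linPart δ) - c • (1 : Module.End ℂ (Fin n → ℂ))) ^ k :
        Module.End ℂ (Fin n → ℂ)) (Lp n g) := by
  induction k with
  | zero => intro g; rfl
  | succ k ih =>
    intro g
    rw [pow_succ, Module.End.mul_apply, ih, pow_succ, Module.End.mul_apply]
    congr 1
    change Lp n (vfD δ g - c • g) = Matrix.toLin' (linPart δ) (Lp n g) - c • Lp n g
    rw [map_sub, Lp_vfD hδ, map_smul]

lemma ev0_sh {δ : Fin n → On n} (hδ : ∀ i, δ i ∈ mId n) (c : ℂ) (k : ℕ) : ∀ g : On n,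
    ev0A n ((((vfD δ : On n →ₗ[ℂ] On n) - c • (1 : Module.End ℂ (On n))) ^ k : Module.End ℂ (On n)) g) =
      (-c) ^ k * ev0A n g := by
  induction k with
  | zero => intro g; rw [pow_zero, pow_zero, one_mul]; rfl
  | succ k ih =>
    intro g
    rw [pow_succ, Module.End.mul_apply, ih, pow_succ, mul_assoc]
    congr 1
    change ev0A n (vfD δ g - c • g) = _
    rw [map_sub, mem_mId.1 (vfD_mem hδ g), map_smul, smul_eq_mul, zero_sub, neg_mul]

lemma poincare_pow {δ : Fin n → On n} {c : ℚ} {M : ℕ}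
    (h : ∀ h ∈ mId n ^ M, ∃ g ∈ mId n ^ M, vfD δ g - (c : ℂ) • g = h) (k : ℕ) :
    ∀ h ∈ mId n ^ M, ∃ g ∈ mId n ^ M, (sh (vfD δ) c ^ k) g = h := by
  induction k with
  | zero => intro x hx; exact ⟨x, hx, rfl⟩
  | succ k ih =>
    intro x hx
    obtain ⟨g, hg, rfl⟩ := ih x hx
    obtain ⟨g', hg', rfl⟩ := h g hg
    refine ⟨g', hg', ?_⟩
    rw [pow_succ, Module.End.mul_apply]
    rfl

lemma exists_y {δ : Fin n → On n} (hδ : ∀ i, δ i ∈ mId n) (w : Fin n → ℚ)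
    (hw : ∀ i, 0 < w i) (hE : EigsEq δ w) :
    ∃ (φ : CoordChange n) (w' : Fin n → ℚ), (∀ i, 0 < w' i) ∧
      ∀ j, (pullE φ).symm (coordG j) ∈ GE (vfD δ) (w' j) := by
  classical
  obtain ⟨M, hM2, hM⟩ := poincare_On hδ w hw hE
  let T : Module.End ℂ (On n) := (vfD δ : On n →ₗ[ℂ] On n)
  have hp : mC n M ≤ (mC n M).comap T := der_pow_mem (D := vfD δ) (fun g _ => vfD_mem hδ g) M
  let Tq : Module.End ℂ (On n ⧸ mC n M) := (mC n M).mapQ (mC n M) T hp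
  have hLM : ∀ z ∈ mId n ^ M, Lp n z = 0 := fun z hz => Lp_sq (Ideal.pow_le_pow_right hM2 hz)
  let Lq : (On n ⧸ mC n M) →ₗ[ℂ] (Fin n → ℂ) := (mC n M).liftQ (Lp n) hLM
  have hLq : ∀ g : On n, Lq (Submodule.Quotient.mk g) = Lp n g := fun g => rfl
  let S : Set (On n) := {g | g ∈ mId n ∧ ∃ k, g ∈ GE (vfD δ) (w k)}
  have hpiece : ∀ (c : ℂ) (v : On n ⧸ mC n M), v ∈ Tq.maxGenEigenspace c →
      Lq v ∈ Submodule.span ℂ (Lp n '' S) := by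
    intro c v hv
    obtain ⟨g, rfl⟩ := Submodule.Quotient.mk_surjective _ v
    rw [Module.End.mem_maxGenEigenspace] at hv
    obtain ⟨N, hN⟩ := hv
    rw [mapQ_pow, Submodule.Quotient.mk_eq_zero] at hN
    rw [hLq]
    by_cases h0 : Lp n g = 0
    · rw [h0]; exact zero_mem _
    have h1 := Lp_sh hδ c N g
    rw [show Lp n _ = 0 from hLM _ hN] at h1
    have hc : ∃ k, c = (w k : ℂ) := by
      by_contra! hne
      have hdet : (Matrix.scalar (Fin n) c - linPart δ).det ≠ 0 := by
        rw [← Matrix.eval_charpoly]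
        have hE' : (linPart δ).charpoly = ∏ i, (Polynomial.X - Polynomial.C ((w i : ℂ))) := hE
        rw [hE', Polynomial.eval_prod, Finset.prod_ne_zero_iff]
        intro i _
        simpa [sub_eq_zero] using hne i
      have hinj : ∀ v : Fin n → ℂ,
          (Matrix.toLin' (linPart δ) - c • (1 : Module.End ℂ (Fin n → ℂ))) v = 0 → v = 0 := by
        intro v hv
        refine Matrix.eq_zero_of_mulVec_eq_zero hdet ?_
        have hv' : Matrix.toLin' (linPart δ) v - c • v = 0 := hv
        rw [Matrix.sub_mulVec]
        rw [Matrix.toLin'_apply] at hv'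
        have : (Matrix.scalar (Fin n) c).mulVec v = c • v := by
          ext i; simp [Matrix.scalar_apply, Matrix.mulVec_diagonal]
        rw [this, ← neg_sub, hv', neg_zero]
      have hinjN : ∀ (k : ℕ) (v : Fin n → ℂ),
          ((Matrix.toLin' (linPart δ) - c • (1 : Module.End ℂ (Fin n → ℂ))) ^ k :
            Module.End ℂ (Fin n → ℂ)) v = 0 → v = 0 := by
        intro k
        induction k with
        | zero => intro v hv; exact hv
        | succ k ih =>
          intro v hv
          rw [pow_succ, Module.End.mul_apply] at hv
          exact hinj v (ih _ hv)
      exact h0 (hinjN N _ h1.symm)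
    obtain ⟨k, rfl⟩ := hc
    have hgm : g ∈ mId n := by
      have h2 := ev0_sh hδ (w k : ℂ) N g
      have hNm : (((vfD δ : On n →ₗ[ℂ] On n) - (w k : ℂ) • (1 : Module.End ℂ (On n))) ^ N :
          Module.End ℂ (On n)) g ∈ mId n := by
        have h3 := mC_anti (n := n) (show 1 ≤ M by omega) hN
        rw [mem_mC, pow_one] at h3
        exact h3
      rw [mem_mId.1 hNm] at h2
      rw [mem_mId]
      refine (mul_eq_zero.1 h2.symm).resolve_left (pow_ne_zero _ (neg_ne_zero.2 ?_))
      exact_mod_cast (hw k).ne'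
    obtain ⟨z, hz, hzeq⟩ := poincare_pow (hM k) N _ hN
    have hL : Lp n g = Lp n (g - z) := by rw [map_sub, hLM z hz, sub_zero]
    rw [hL]
    refine Submodule.subset_span ⟨g - z, ⟨sub_mem hgm (Ideal.pow_le_self (by omega) hz), k, ?_⟩, rfl⟩
    rw [mem_GE]
    refine ⟨N, ?_⟩
    rw [map_sub, hzeq]
    exact sub_self _
  have hspan : Submodule.span ℂ (Lp n '' S) = ⊤ := by
    rw [eq_top_iff]
    intro v _
    have hv : Lp n (∑ k, v k • coordG k) = v := by
      ext i
      rw [Lp_apply, pd_sum, map_sum]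
      simp only [pd_smul, pd_coordG, map_smul]
      rw [Finset.sum_eq_single i]
      · simp
      · intro b _ hb; simp [hb.symm]
      · simp
    rw [← hv, ← hLq]
    have h1 : (⊤ : Submodule ℂ (On n ⧸ mC n M)) ≤ (Submodule.span ℂ (Lp n '' S)).comap Lq := by
      rw [← Module.End.iSup_maxGenEigenspace_eq_top Tq]
      exact iSup_le fun c v hv => hpiece c v hv
    exact h1 Submodule.mem_top
  obtain ⟨b, hbs, hbspan, hbli⟩ := exists_linearIndependent ℂ (Lp n '' S)
  let Bas : Module.Basis b ℂ (Fin n → ℂ) := Module.Basis.mk hbli (by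
    rw [Subtype.range_coe, hbspan, hspan])
  have : Finite b := Module.Finite.finite_basis Bas
  have : Fintype b := Fintype.ofFinite b
  have hcard : Fintype.card b = n := by
    rw [← Module.finrank_eq_card_basis Bas]; simp
  let e : Fin n ≃ b := (Fintype.equivFinOfCardEq hcard).symm
  choose y hyS hyL using fun j => hbs (e j).2
  choose k hk using fun j => (hyS j).2
  obtain ⟨φ, hφ⟩ := exists_coordChange y (fun j => (hyS j).1) (by
    rw [← Matrix.linearIndependent_rows_iff_isUnit]
    have h1 : LinearIndependent ℂ (fun j => (e j : Fin n → ℂ)) := hbli.comp e e.injective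
    have h2 : (fun j => (e j : Fin n → ℂ)) =
        Matrix.row (Matrix.of fun j i => ev0A n (pd i (y j))) := by
      funext j
      rw [← hyL j]
      rfl
    rw [h2] at h1
    exact h1)
  refine ⟨φ, fun j => w (k j), fun j => hw _, fun j => ?_⟩
  rw [← hφ, AlgEquiv.symm_apply_apply]
  exact hk j

theorem backward_dir (X : Set (Fin n → ℂ)) (hX : IsAnalyticGermAt0 n X) (f : On n)
    (δ : Fin n → On n) (hδX : δ ∈ ThetaX n X) (hδ : ∀ i, δ i ∈ mId n) (hf : applyVF δ f = f)
    (w : Fin n → ℚ) (hw : ∀ i, 0 < w i) (hE : EigsEq δ w) :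
    ∃ w : Fin n → ℚ, (∀ i, 0 < w i) ∧ RelQH n X f w := by
  classical
  obtain ⟨φ, w', hw', hy⟩ := exists_y hδ w hw hE
  obtain ⟨wm, _, hwm0, hwm, _⟩ := exists_bounds w' hw'
  have hyV : ∀ j, (pullE φ).symm (coordG j) ∈ Vd (vfD δ) (conjD (pullE φ) (eulerD w')) (w' j) :=
    fun j => mem_Vd.2 ⟨hy j, conjD_y w' φ j⟩
  have hT : ∀ g ∈ mId n, vfD δ g ∈ mId n := fun g _ => vfD_mem hδ g
  have hD : ∀ g ∈ mId n, conjD (pullE φ) (eulerD w') g ∈ mId n := by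
    intro g _
    rw [conjD_apply, pullE_symm_mem]
    exact vfD_mem (fun i => smul_mem_ideal _ _ (coordG_mem i)) _
  refine ⟨w', hw', φ, ?_, ?_⟩
  · rw [isQH_iff]
    refine D_eq_of_GE hT hD hwm0 hwm hyV (span_y φ) (GE_of_eig ?_)
    rw [vfD_apply, hf]
    simp
  · have hJ := ideal_homog hT hwm0 hwm hyV (span_y φ) (IX n X) (IX_le_mId hX.1) (fun g hg => by
      rw [vfD_apply]; exact hδX g hg)
    have hfg := (IsNoetherian.noetherian (R := On n) (IX n X))
    rw [← hJ] at hfg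
    obtain ⟨s, hs, hss⟩ := (Submodule.fg_span_iff_fg_span_finset_subset _).1 hfg
    have hs' : ∀ j : Fin s.card, ((s.equivFin.symm j : On n) ∈ IX n X ∧ ∃ d : ℚ, 0 < d ∧
      conjD (pullE φ) (eulerD w') (s.equivFin.symm j : On n) = (d : ℂ) • (s.equivFin.symm j : On n)) :=
      fun j => hs (s.equivFin.symm j).2
    choose h1 d hd hdD using hs'
    refine ⟨s.card, fun j => (s.equivFin.symm j : On n), d, ?_, hd, fun j => (isQH_iff _ _ _ _).2 (hdD j)⟩
    rw [← hJ]
    refine Eq.trans ?_ hss.symm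
    congr 1
    ext x
    constructor
    · rintro ⟨j, rfl⟩
      exact (s.equivFin.symm j).2
    · intro hx
      exact ⟨s.equivFin ⟨x, hx⟩, by simp⟩

/-- Corollary 3.3: the pair `(f, X)` is relatively quasihomogeneous iff there exists a
logarithmic vector field `δ ∈ Θ_X` with `δ(0) = 0` and `δ(f) = f` whose eigenvalues are
all positive rational numbers. -/
theorem relQH_iff_exists_logarithmic_euler (n : ℕ) (X : Set (Fin n → ℂ))
    (hX : IsAnalyticGermAt0 n X) (f : On n) (hf : f ∈ mId n) :
    (∃ w : Fin n → ℚ, (∀ i, 0 < w i) ∧ RelQH n X f w) ↔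
      ∃ δ : Fin n → On n, δ ∈ ThetaX n X ∧ (∀ i, δ i ∈ mId n) ∧ applyVF δ f = f ∧
        ∃ w : Fin n → ℚ, (∀ i, 0 < w i) ∧ EigsEq δ w := by
  constructor
  · rintro ⟨w, hw, h⟩
    exact forward_dir X f w hw h
  · rintro ⟨δ, h1, h2, h3, w, hw, hE⟩
    exact backward_dir X hX f δ h1 h2 h3 w hw hE

end
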